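/- Let l ≥ 3, let α ∈ R^l be an admissible function, and let 1 ≤ i < j ≤ l. Then: (i) ρ^{(−4)}_{ij}α does not depend on z_j and, regarded as a function of the remaining l−2 variables, is an admissible function in R^{l−2}; (ii) ρ^{(−3)}_{ij}α = 0; (iii) ρ^{(−2)}_{ij}α is an admissible function in R^{l−1} (in the l−1 variables z₁,…,ẑ_i,…,z_l). -/

import Mathlib

open scoped Classical

noncomputable section

namespace Griess

open MvPolynomial

variable {k : Type} [Field k]

/-- The field `k(z₁,…,z_l)` of rational functions over `k` in `l` variables. -/
abbrev RF (k : Type) [Field k] (l : ℕ) : Type := FractionRing (MvPolynomial (Fin l) k)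

/-- The variable `zᵢ` as an element of the rational function field. -/
def zv {k : Type} [Field k] {l : ℕ} (i : Fin l) : RF k l :=
  algebraMap (MvPolynomial (Fin l) k) (RF k l) (MvPolynomial.X i)

/-- The space `Φ^l` of rational functions of the form
`p(z₁,…,z_l) · ∏_{i<j} (zᵢ - z_j)^{k_{ij}}`. -/
def Phi (k : Type) [Field k] (l : ℕ) : Set (RF k l) :=
  { x | ∃ (p : MvPolynomial (Fin l) k) (e : Fin l → Fin l → ℤ),
      x = algebraMap (MvPolynomial (Fin l) k) (RF k l) p *
        ∏ i : Fin l, ∏ j : Fin l, (if i < j then (zv i - zv j) ^ e i j else 1) }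

/-- `D` is the family of partial derivative operators `∂_{z₁},…,∂_{z_l}`:
a family of `k`-linear derivations with `D i (z j) = δ_{ij}`. -/
def IsPartialDeriv {l : ℕ} (D : Fin l → Derivation k (RF k l) (RF k l)) : Prop :=
  ∀ i j : Fin l, D i (zv j) = if j = i then 1 else 0

/-- The operator `Δ = Σᵢ ∂_{zᵢ}`. -/
def Delta {l : ℕ} (D : Fin l → Derivation k (RF k l) (RF k l)) (α : RF k l) : RF k l :=
  ∑ i, D i α

/-- The operator `Δ*(n₁,…,n_l) = Σᵢ (zᵢ² ∂_{zᵢ} + nᵢ zᵢ)`. -/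
def DeltaStar {l : ℕ} (D : Fin l → Derivation k (RF k l) (RF k l)) (n : Fin l → ℤ)
    (α : RF k l) : RF k l :=
  ∑ i, ((zv i) ^ 2 * D i α + (n i : RF k l) * zv i * α)

section Subst

variable {l : ℕ}

/-- The embedding of polynomials in `z₁,…,z_l` into rational functions of
`z₁,…,z_l` and one extra variable `t` (`= RatFunc.X`). -/
def toRatFuncHom (k : Type) [Field k] (l : ℕ) :
    Polynomial (MvPolynomial (Fin l) k) →+* RatFunc (RF k l) :=
  (algebraMap (Polynomial (RF k l)) (RatFunc (RF k l))).comp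
    (Polynomial.mapRingHom (algebraMap (MvPolynomial (Fin l) k) (RF k l)))

lemma toRatFuncHom_injective : Function.Injective (toRatFuncHom k l) := by
  have h1 : Function.Injective (algebraMap (Polynomial (RF k l)) (RatFunc (RF k l))) :=
    IsFractionRing.injective _ _
  have h2 : Function.Injective
      (Polynomial.mapRingHom (algebraMap (MvPolynomial (Fin l) k) (RF k l))) :=
    Polynomial.map_injective _ (IsFractionRing.injective _ _)
  exact fun a b hab => h2 (h1 hab)

/-- Polynomial level substitution `z_j ↦ t·z_j` for `j ∈ J`. -/
def scaleAux (k : Type) [Field k] (l : ℕ) (J : Finset (Fin l)) :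
    MvPolynomial (Fin l) k →+* Polynomial (MvPolynomial (Fin l) k) :=
  (MvPolynomial.aeval (R := k) fun i =>
    if i ∈ J then Polynomial.X * Polynomial.C (MvPolynomial.X i)
    else Polynomial.C (MvPolynomial.X i)).toRingHom

lemma scaleAux_injective (J : Finset (Fin l)) :
    Function.Injective (scaleAux k l J) := by
  have h : (Polynomial.evalRingHom (1 : MvPolynomial (Fin l) k)).comp (scaleAux k l J)
      = RingHom.id _ := by
    apply MvPolynomial.ringHom_ext
    · intro r; simp [scaleAux]
    · intro i; by_cases hi : i ∈ J <;> simp [scaleAux, hi]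
  intro p q hpq
  have hp := DFunLike.congr_fun h p
  have hq := DFunLike.congr_fun h q
  simp only [RingHom.comp_apply, RingHom.id_apply] at hp hq
  rw [← hp, ← hq, hpq]

/-- The substitution `z_j ↦ t·z_j` (for `j ∈ J`), as a map from rational functions
in `z₁,…,z_l` to rational functions in `z₁,…,z_l` and `t`.  Reading off the
coefficients of the Laurent expansion in `t` at `t = 0` of `scaleJ J α` yields the
decomposition of `α` into its homogeneous components with respect to the total degree
in the variables `{z_j : j ∈ J}`, i.e. the expansion of `α` in the domain where the
variables of `J` are much smaller than the remaining variables. -/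
def scaleJ (J : Finset (Fin l)) : RF k l →+* RatFunc (RF k l) :=
  IsFractionRing.lift (g := (toRatFuncHom k l).comp (scaleAux k l J))
    (fun a b hab => scaleAux_injective J (toRatFuncHom_injective hab))

/-- Polynomial level substitution `z_i ↦ z_j + t`. -/
def subPairAux (k : Type) [Field k] (l : ℕ) (i j : Fin l) :
    MvPolynomial (Fin l) k →+* Polynomial (MvPolynomial (Fin l) k) :=
  (MvPolynomial.aeval (R := k) fun s =>
    if s = i then Polynomial.X + Polynomial.C (MvPolynomial.X j)
    else Polynomial.C (MvPolynomial.X s)).toRingHom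

lemma subPairAux_injective (i j : Fin l) :
    Function.Injective (subPairAux k l i j) := by
  have h : (Polynomial.evalRingHom (MvPolynomial.X i - MvPolynomial.X j)).comp
      (subPairAux k l i j) = RingHom.id _ := by
    apply MvPolynomial.ringHom_ext
    · intro r; simp [subPairAux]
    · intro s; by_cases hs : s = i <;> simp [subPairAux, hs]
  intro p q hpq
  have hp := DFunLike.congr_fun h p
  have hq := DFunLike.congr_fun h q
  simp only [RingHom.comp_apply, RingHom.id_apply] at hp hq
  rw [← hp, ← hq, hpq]

/-- The substitution `z_i ↦ z_j + t`, as a map from rational functions in `z₁,…,z_l`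
to rational functions in the variables `z₁,…,z_l` and `t`.  Reading off the Laurent
coefficients in `t` at `t = 0` yields the expansion of a rational function in powers
of `z_i - z_j`, with coefficients not involving `z_i`. -/
def subPair (i j : Fin l) : RF k l →+* RatFunc (RF k l) :=
  IsFractionRing.lift (g := (toRatFuncHom k l).comp (subPairAux k l i j))
    (fun a b hab => subPairAux_injective i j (toRatFuncHom_injective hab))

end Subst

/-- The coefficient of `tᵐ` in the Laurent expansion at `t = 0` of a rational
function of `t`. -/
def lcoeff {L : Type} [Field L] (m : ℤ) (f : RatFunc L) : L :=
  (f : LaurentSeries L).coeff m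

/-- The component `(α)_n` of `α` of degree `n` with respect to the partition
`{1,…,l} = Jᶜ ⊔ J` and the weights `d`:  the part of the expansion of `α` in the
domain where the variables of `J` are much smaller than those of `Jᶜ` whose total
degree in the variables `{z_j : j ∈ J}` equals `n - Σ_{j∈J} d_j`. -/
def component {l : ℕ} (J : Finset (Fin l)) (d : Fin l → ℤ) (n : ℤ) (α : RF k l) :
    RF k l :=
  lcoeff (n - ∑ j ∈ J, d j) (scaleJ J α)

/-- `α` is homogeneous of total degree `d` in the variables `{z_i : i ∈ S}`:
substituting `z_i ↦ t·z_i` for `i ∈ S` multiplies `α` by `t^d`. -/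
def IsHomogeneousOn {l : ℕ} (S : Finset (Fin l)) (d : ℤ) (α : RF k l) : Prop :=
  scaleJ S α = RatFunc.X ^ d * RatFunc.C α

/-- `ρ^{(m)}_{ij} α`: the coefficient of `(z_i - z_j)^m` in the expansion of `α`
in powers of `z_i - z_j` (the coefficients do not involve `z_i`). -/
def rho {l : ℕ} (i j : Fin l) (m : ℤ) (α : RF k l) : RF k l :=
  lcoeff m (subPair i j α)

/-- `α` is a rational function of the variables `{z_i : i ∈ S}` only. -/
def dependsOnlyOn {l : ℕ} (S : Finset (Fin l)) (α : RF k l) : Prop :=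
  α ∈ Subfield.closure (Set.range (algebraMap k (RF k l)) ∪ {x | ∃ i ∈ S, x = zv i})

/-- `α` is an admissible function of the variables `{z_i : i ∈ S}` (the space
`R^{|S|}`):  `α ∈ Φ` is a rational function of the variables of `S` only, it is
`(4,…,4)`-regular and homogeneous of degree `-2|S|` in these variables, and all its
components of negative degree, as well as those of degree `1`, vanish (with respect
to every partition of `S` and all weights equal to `2`). -/
def Admissible {l : ℕ} (D : Fin l → Derivation k (RF k l) (RF k l)) (S : Finset (Fin l))
    (α : RF k l) : Prop :=
  α ∈ Phi k l ∧ dependsOnlyOn S α ∧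
    (∑ i ∈ S, ((zv i) ^ 2 * D i α + 4 * zv i * α)) = 0 ∧
    IsHomogeneousOn S (-(2 * (S.card : ℤ))) α ∧
    ∀ J ⊆ S, ∀ n : ℤ, (n < 0 ∨ n = 1) → component J (fun _ => 2) n α = 0

/-- `α` is an indecomposable admissible function of the variables `{z_i : i ∈ S}`
(the space `R₀^{|S|}`): admissible, and all the components `(α)₀` with respect to
partitions of `S` into two nonempty parts vanish. -/
def AdmissibleInd {l : ℕ} (D : Fin l → Derivation k (RF k l) (RF k l))
    (S : Finset (Fin l)) (α : RF k l) : Prop :=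
  Admissible D S α ∧
    ∀ J ⊆ S, J ≠ ∅ → J ≠ S → component J (fun _ => 2) 0 α = 0

section Shift

variable {l : ℕ}

/-- Polynomial level substitution `z_s ↦ z_s - z_t` for `s ∈ S`. -/
def shiftAuxP (k : Type) [Field k] (l : ℕ) (S : Finset (Fin l)) (t : Fin l) :
    MvPolynomial (Fin l) k →+* MvPolynomial (Fin l) k :=
  (MvPolynomial.aeval (R := k) fun s =>
    if s ∈ S then MvPolynomial.X s - MvPolynomial.X t else MvPolynomial.X s).toRingHom

lemma shiftAuxP_injective (S : Finset (Fin l)) (t : Fin l) (ht : t ∉ S) :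
    Function.Injective (shiftAuxP k l S t) := by
  have h : ((MvPolynomial.aeval (R := k) fun s =>
      if s ∈ S then MvPolynomial.X s + MvPolynomial.X t
      else MvPolynomial.X s).toRingHom).comp (shiftAuxP k l S t) = RingHom.id _ := by
    apply MvPolynomial.ringHom_ext
    · intro r; simp [shiftAuxP]
    · intro s
      by_cases hs : s ∈ S
      · have hst : s ≠ t := fun hst => ht (hst ▸ hs)
        simp [shiftAuxP, hs, ht]
      · simp [shiftAuxP, hs]
  intro p q hpq
  have hp := DFunLike.congr_fun h p
  have hq := DFunLike.congr_fun h q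
  simp only [RingHom.comp_apply, RingHom.id_apply] at hp hq
  rw [← hp, ← hq, hpq]

/-- The shift operator substituting `z_s - z_t` for `z_s`, for all `s ∈ S`. -/
def shiftT (S : Finset (Fin l)) (t : Fin l) (ht : t ∉ S) : RF k l →+* RF k l :=
  IsFractionRing.lift
    (g := (algebraMap (MvPolynomial (Fin l) k) (RF k l)).comp (shiftAuxP k l S t))
    (fun a b hab =>
      shiftAuxP_injective S t ht (IsFractionRing.injective _ _ hab))

/-- The operator `ℰ = Σ_{s ∈ S} (-z_s⁻¹ ∂_{z_s} + 2 z_s⁻²)`. -/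
def curlyE {l : ℕ} (D : Fin l → Derivation k (RF k l) (RF k l)) (S : Finset (Fin l))
    (β : RF k l) : RF k l :=
  ∑ s ∈ S, (-((zv s)⁻¹ * D s β) + 2 * (zv s) ^ (-2 : ℤ) * β)

end Shift

end Griess

/-! An admissible `α` is homogeneous of degree `-2l` and killed by `Δ* = Σ (z_s² ∂_s + 4 z_s)`, and
`Σ ∂_s` is nilpotent on `Φ`; so `α` is a lowest weight vector of weight zero for the `sl₂` spanned
by `Σ ∂_s`, `Σ z_s² ∂_s + …` and the Euler field, hence translation invariant. Each
`ρ^{(n)}_{ij} α` is then translation invariant, and a translation invariant function is zero as soon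
as the degree-zero term of its expansion at `z_j = 0` is. When `i` and `j` lie in the same part of a
partition, `ρ^{(n)}_{ij}` commutes with taking components, up to a shift of the degree by `n`. Thus
the terms of degree `0` and `1` in `z_j` of `ρ^{(n)}_{ij} α` are `ρ^{(n)}_{ij}` of the components of
`α` of degree `n + 4` and `n + 5` in `z_i, z_j`; the vanishing of the components of degree `< 0` and
`1` gives `ρ^{(n)} α = 0` for `n < -4` and `n = -3`, and `∂_j ρ^{(-4)} α = 0`.
-/

namespace Griess

/-- Mathlib also derives a `k`-algebra structure on `L⸨t⸩` from the one on power series. The two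
are not definitionally equal, and only this one is compatible with the module structure. -/
local instance {k L : Type*} [CommRing k] [CommRing L] [Algebra k L] :
    Algebra k (LaurentSeries L) := HahnSeries.instAlgebra

section LaurentSeries

variable {L : Type*}

section Derivation

variable {k : Type*} [CommRing k] [CommRing L] [Algebra k L]

/-- The derivation of `L⸨t⸩` acting on the coefficient of `tⁿ` by `E n`, for a family `E` of
linear maps satisfying the graded Leibniz rule. -/
def gradedDerivation (E : ℤ → L →ₗ[k] L)
    (hE : ∀ m n a b, E (m + n) (a * b) = a * E n b + b * E m a) :
    Derivation k (LaurentSeries L) (LaurentSeries L) :=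
  let apply (f : LaurentSeries L) : LaurentSeries L :=
    { coeff := fun n => E n (f.coeff n)
      isPWO_support' := f.isPWO_support.mono fun n hn h0 => hn (by simp [h0]) }
  have support_apply (f : LaurentSeries L) : (apply f).support ⊆ f.support :=
    fun n hn h0 => hn (by simp [apply, h0])
  Derivation.mk'
    { toFun := apply
      map_add' := fun f g => by ext n; simp [apply]
      map_smul' := fun c f => by ext n; simp [apply] }
    fun f g => by
      ext n
      change E n ((f * g).coeff n) = (f * apply g + g * apply f).coeff n
      rw [mul_comm g, HahnSeries.coeff_add, HahnSeries.coeff_mul,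
        HahnSeries.coeff_mul_right' g.isPWO_support (support_apply g),
        HahnSeries.coeff_mul_left' f.isPWO_support (support_apply f),
        ← Finset.sum_add_distrib, map_sum]
      refine Finset.sum_congr rfl fun p hp => ?_
      rw [← (Finset.mem_antidiagonal.1 hp).2.2, hE, mul_comm (g.coeff _)]

/-- The extension of a derivation of `L` to `L⸨t⸩` that kills `t`. -/
def coeffDerivation (d : Derivation k L L) : Derivation k (LaurentSeries L) (LaurentSeries L) :=
  gradedDerivation (fun _ => d.toLinearMap) fun _ _ a b => d.leibniz a b

/-- The Euler derivation `t d/dt` of `L⸨t⸩`. -/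
def eulerDerivation (k L : Type*) [CommRing k] [CommRing L] [Algebra k L] :
    Derivation k (LaurentSeries L) (LaurentSeries L) :=
  gradedDerivation (fun n => LinearMap.mulLeft k (n : L)) fun m n a b => by
    simp only [LinearMap.mulLeft_apply, Int.cast_add]
    ring

@[simp]
lemma coeffDerivation_coeff (d : Derivation k L L) (f : LaurentSeries L) (n : ℤ) :
    (coeffDerivation d f).coeff n = d (f.coeff n) := rfl

@[simp]
lemma eulerDerivation_coeff (f : LaurentSeries L) (n : ℤ) :
    (eulerDerivation k L f).coeff n = n * f.coeff n := rfl

@[simp]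
lemma coeffDerivation_single (d : Derivation k L L) (n : ℤ) (a : L) :
    coeffDerivation d (HahnSeries.single n a) = HahnSeries.single n (d a) := by
  ext m
  rcases eq_or_ne m n with rfl | h
  · simp
  · simp [HahnSeries.coeff_single_of_ne h]

@[simp]
lemma eulerDerivation_single (n : ℤ) (a : L) :
    eulerDerivation k L (HahnSeries.single n a) = HahnSeries.single n (n * a) := by
  ext m
  rcases eq_or_ne m n with rfl | h
  · simp
  · simp [HahnSeries.coeff_single_of_ne h]

end Derivation

/-- The ring of Laurent series with coefficients in the subring `V`. -/
def coeffSubring [CommRing L] (V : Subring L) : Subring (LaurentSeries L) where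
  carrier := {f | ∀ n, f.coeff n ∈ V}
  mul_mem' {f g} hf hg n := by
    rw [HahnSeries.coeff_mul]
    exact sum_mem fun p _ => mul_mem (hf _) (hg _)
  one_mem' n := by
    rw [HahnSeries.coeff_one]; split_ifs <;> simp
  add_mem' hf hg n := add_mem (hf n) (hg n)
  zero_mem' _ := by simp
  neg_mem' hf n := neg_mem (hf n)

/-- The ring of power series with coefficients in the subring `V`, inside `L⸨t⸩`. -/
def integralSubring [CommRing L] (V : Subring L) : Subring (LaurentSeries L) :=
  ((HahnSeries.ofPowerSeries ℤ L).comp (PowerSeries.map V.subtype)).range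

section Subring

variable [CommRing L] {V W : Subring L} {f g : LaurentSeries L}

lemma coeff_eq_zero_of_mem_integralSubring (hf : f ∈ integralSubring V) {n : ℤ} (hn : n < 0) :
    f.coeff n = 0 := by
  obtain ⟨p, rfl⟩ := hf
  rw [RingHom.comp_apply, PowerSeries.coeff_coe, if_pos hn]

lemma integralSubring_le_coeffSubring : integralSubring V ≤ coeffSubring V := by
  rintro _ ⟨p, rfl⟩ n
  rw [RingHom.comp_apply, PowerSeries.coeff_coe]
  split_ifs <;> simp

lemma integralSubring_mono (h : V ≤ W) : integralSubring V ≤ integralSubring W := by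
  rintro _ ⟨p, rfl⟩
  exact ⟨PowerSeries.map (Subring.inclusion h) p, by ext; simp [PowerSeries.coeff_coe]⟩

lemma C_mem_integralSubring {a : L} (ha : a ∈ V) : HahnSeries.C a ∈ integralSubring V :=
  ⟨PowerSeries.C ⟨a, ha⟩, by simp⟩

lemma single_one_mem_integralSubring {a : L} (ha : a ∈ V) :
    HahnSeries.single 1 a ∈ integralSubring V :=
  ⟨PowerSeries.C ⟨a, ha⟩ * PowerSeries.X, by simp⟩

lemma single_mem_coeffSubring {a : L} (n : ℤ) (ha : a ∈ V) :
    HahnSeries.single n a ∈ coeffSubring V := fun m => by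
  rcases eq_or_ne m n with rfl | h
  · simpa using ha
  · simp [HahnSeries.coeff_single_of_ne h]

lemma coeff_zero_ofPowerSeries_map_subtype (p : PowerSeries V) :
    ((HahnSeries.ofPowerSeries ℤ L).comp (PowerSeries.map V.subtype) p).coeff 0 =
      PowerSeries.constantCoeff p := by
  simp [PowerSeries.coeff_coe, -PowerSeries.coeff_zero_eq_constantCoeff,
    ← PowerSeries.coeff_zero_eq_constantCoeff_apply]

lemma coeff_zero_mul_of_mem_integralSubring (hf : f ∈ integralSubring V)
    (hg : g ∈ integralSubring V) : (f * g).coeff 0 = f.coeff 0 * g.coeff 0 := by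
  obtain ⟨p, rfl⟩ := hf
  obtain ⟨q, rfl⟩ := hg
  simp only [← map_mul, coeff_zero_ofPowerSeries_map_subtype]
  simp

lemma map_mul_of_mem_coeffSubring {M : Type*} [CommRing M] (φ : L →+ M)
    (hφ : ∀ a ∈ V, ∀ b ∈ V, φ (a * b) = φ a * φ b)
    (hf : f ∈ coeffSubring V) (hg : g ∈ coeffSubring V) :
    (f * g).map φ = f.map φ * g.map φ := by
  ext n
  have map_eq_zero {h : LaurentSeries L} {m : ℤ} (hm : h.coeff m = 0) :
      (h.map φ).coeff m = 0 := by rw [HahnSeries.map_coeff, hm, map_zero]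
  simp only [HahnSeries.coeff_mul, HahnSeries.map_coeff, map_sum, hφ _ (hf _) _ (hg _)]
  refine (Finset.sum_subset (fun p hp => ?_) fun p hp hp' => ?_).symm
  · rw [Finset.mem_antidiagonal] at hp ⊢
    exact ⟨mt map_eq_zero hp.1, mt map_eq_zero hp.2.1, hp.2.2⟩
  · by_contra! h0
    exact hp' (Finset.mem_antidiagonal.2
      ⟨left_ne_zero_of_mul h0, right_ne_zero_of_mul h0, (Finset.mem_antidiagonal.1 hp).2.2⟩)

end Subring

section Field

variable [Field L] {V : Subring L} {f : LaurentSeries L}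

lemma inv_mem_integralSubring (hf : f ∈ integralSubring V) (h0 : f.coeff 0 ≠ 0)
    (hinv : (f.coeff 0)⁻¹ ∈ V) : f⁻¹ ∈ integralSubring V := by
  obtain ⟨p, rfl⟩ := hf
  rw [coeff_zero_ofPowerSeries_map_subtype] at h0 hinv
  let u : Vˣ := ⟨PowerSeries.constantCoeff p, ⟨_, hinv⟩, Subtype.ext (mul_inv_cancel₀ h0),
    Subtype.ext (inv_mul_cancel₀ h0)⟩
  refine ⟨PowerSeries.invOfUnit p u, eq_inv_of_mul_eq_one_left ?_⟩
  rw [← map_mul, PowerSeries.invOfUnit_mul p u rfl, map_one]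

lemma single_zpow (a : ℤ) (r : L) (e : ℤ) :
    (HahnSeries.single a r : LaurentSeries L) ^ e = HahnSeries.single (e * a) (r ^ e) := by
  obtain ⟨n, rfl | rfl⟩ := e.eq_nat_or_neg
  · simp [HahnSeries.single_pow]
  · simp [HahnSeries.single_pow, HahnSeries.inv_single]

end Field

end LaurentSeries

open scoped RatFunc in
/-- The Laurent expansion at `t = 0` of a rational function of `t`. -/
def ratFuncToLaurent (L : Type) [Field L] : RatFunc L →+* LaurentSeries L :=
  algebraMap (RatFunc L) (LaurentSeries L)

section RatFunc

variable {L : Type} [Field L]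

lemma ratFuncToLaurent_C (a : L) : ratFuncToLaurent L (RatFunc.C a) = HahnSeries.C a := by
  have h := RatFunc.coe_coe (Polynomial.C a)
  rw [Polynomial.coe_C, PowerSeries.coe_C] at h
  rw [h, ← RatFunc.algebraMap_C]
  rfl

lemma ratFuncToLaurent_X : ratFuncToLaurent L RatFunc.X = HahnSeries.single 1 1 :=
  RatFunc.coe_X

end RatFunc

section Expansion

variable {k : Type} [Field k] {l : ℕ}

lemma ratFuncToLaurent_toRatFuncHom_C (p : MvPolynomial (Fin l) k) :
    ratFuncToLaurent (RF k l) (toRatFuncHom k l (Polynomial.C p)) =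
      HahnSeries.C (algebraMap _ (RF k l) p) := by
  simp [toRatFuncHom, ratFuncToLaurent_C]

lemma ratFuncToLaurent_toRatFuncHom_X :
    ratFuncToLaurent (RF k l) (toRatFuncHom k l Polynomial.X) = HahnSeries.single 1 1 := by
  simp [toRatFuncHom, ratFuncToLaurent_X]

lemma algebraMap_laurentSeries (c : k) :
    algebraMap k (LaurentSeries (RF k l)) c =
      HahnSeries.C (algebraMap (MvPolynomial (Fin l) k) (RF k l) (MvPolynomial.C c)) := by
  rw [← MvPolynomial.algebraMap_eq, ← IsScalarTower.algebraMap_apply]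
  rfl

lemma ratFuncToLaurent_subPair_algebraMap (i j : Fin l) (p : MvPolynomial (Fin l) k) :
    ratFuncToLaurent (RF k l) (subPair i j (algebraMap _ (RF k l) p)) =
      ratFuncToLaurent (RF k l) (toRatFuncHom k l (subPairAux k l i j p)) :=
  congrArg _ (IsFractionRing.lift_algebraMap _ _)

lemma ratFuncToLaurent_scaleJ_algebraMap (J : Finset (Fin l)) (p : MvPolynomial (Fin l) k) :
    ratFuncToLaurent (RF k l) (scaleJ J (algebraMap _ (RF k l) p)) =
      ratFuncToLaurent (RF k l) (toRatFuncHom k l (scaleAux k l J p)) :=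
  congrArg _ (IsFractionRing.lift_algebraMap _ _)

/-- The expansion `α ↦ Σ ρ^{(n)}_{ij}(α) tⁿ` in powers of `t = z_i - z_j`. -/
def pairExpansion (i j : Fin l) : RF k l →ₐ[k] LaurentSeries (RF k l) where
  __ := (ratFuncToLaurent (RF k l)).comp (subPair i j)
  commutes' c := by
    have h : subPairAux k l i j (MvPolynomial.C c) = Polynomial.C (MvPolynomial.C c) := by
      simp [subPairAux, Polynomial.algebraMap_apply]
    rw [algebraMap_laurentSeries, ← ratFuncToLaurent_toRatFuncHom_C, ← h,
      ← ratFuncToLaurent_subPair_algebraMap, ← MvPolynomial.algebraMap_eq,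
      ← IsScalarTower.algebraMap_apply]
    rfl

/-- The expansion of a function into its components of degree `n` in the variables indexed by `J`,
collected as a Laurent series `Σ α_n tⁿ`. -/
def scaleExpansion (J : Finset (Fin l)) : RF k l →ₐ[k] LaurentSeries (RF k l) where
  __ := (ratFuncToLaurent (RF k l)).comp (scaleJ J)
  commutes' c := by
    have h : scaleAux k l J (MvPolynomial.C c) = Polynomial.C (MvPolynomial.C c) := by
      simp [scaleAux, Polynomial.algebraMap_apply]
    rw [algebraMap_laurentSeries, ← ratFuncToLaurent_toRatFuncHom_C, ← h,
      ← ratFuncToLaurent_scaleJ_algebraMap, ← MvPolynomial.algebraMap_eq,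
      ← IsScalarTower.algebraMap_apply]
    rfl

variable {i j s : Fin l} {J S : Finset (Fin l)}

lemma rho_eq_coeff (i j : Fin l) (m : ℤ) (α : RF k l) :
    rho i j m α = (pairExpansion i j α).coeff m := rfl

lemma component_eq_coeff (J : Finset (Fin l)) (d : Fin l → ℤ) (n : ℤ) (α : RF k l) :
    component J d n α = (scaleExpansion J α).coeff (n - ∑ j ∈ J, d j) := rfl

lemma isHomogeneousOn_iff {d : ℤ} {α : RF k l} :
    IsHomogeneousOn S d α ↔ scaleExpansion S α = HahnSeries.single d α := by
  have h : ratFuncToLaurent (RF k l) (RatFunc.X ^ d * RatFunc.C α) = HahnSeries.single d α := by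
    rw [map_mul, map_zpow₀, ratFuncToLaurent_C, ratFuncToLaurent_X, single_zpow, HahnSeries.C_apply,
      HahnSeries.single_mul_single]
    simp
  rw [← h]
  exact (ratFuncToLaurent (RF k l)).injective.eq_iff.symm

lemma pairExpansion_algebraMap (i j : Fin l) (p : MvPolynomial (Fin l) k) :
    pairExpansion i j (algebraMap _ (RF k l) p) =
      ratFuncToLaurent (RF k l) (toRatFuncHom k l (subPairAux k l i j p)) :=
  ratFuncToLaurent_subPair_algebraMap i j p

lemma scaleExpansion_algebraMap (J : Finset (Fin l)) (p : MvPolynomial (Fin l) k) :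
    scaleExpansion J (algebraMap _ (RF k l) p) =
      ratFuncToLaurent (RF k l) (toRatFuncHom k l (scaleAux k l J p)) :=
  ratFuncToLaurent_scaleJ_algebraMap J p

lemma pairExpansion_zv_of_ne (j : Fin l) (h : s ≠ i) :
    pairExpansion i j (zv s : RF k l) = HahnSeries.C (zv s) := by
  rw [zv, pairExpansion_algebraMap, ← ratFuncToLaurent_toRatFuncHom_C]
  simp [subPairAux, h]

lemma pairExpansion_zv_self (i j : Fin l) :
    pairExpansion i j (zv i : RF k l) = HahnSeries.C (zv j) + HahnSeries.single 1 1 := by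
  rw [zv, zv, pairExpansion_algebraMap, ← ratFuncToLaurent_toRatFuncHom_C,
    ← ratFuncToLaurent_toRatFuncHom_X, ← map_add, ← map_add]
  simp [subPairAux, add_comm]

lemma scaleExpansion_zv_of_mem (h : s ∈ J) :
    scaleExpansion J (zv s : RF k l) = HahnSeries.single 1 (zv s) := by
  have hs : (HahnSeries.single 1 (zv s) : LaurentSeries (RF k l)) =
      HahnSeries.single 1 1 * HahnSeries.C (zv s) := by
    simp [HahnSeries.C_apply, HahnSeries.single_mul_single]
  rw [hs, zv, scaleExpansion_algebraMap, ← ratFuncToLaurent_toRatFuncHom_C,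
    ← ratFuncToLaurent_toRatFuncHom_X, ← map_mul, ← map_mul]
  simp [scaleAux, h]

lemma scaleExpansion_zv_of_notMem (h : s ∉ J) :
    scaleExpansion J (zv s : RF k l) = HahnSeries.C (zv s) := by
  rw [zv, scaleExpansion_algebraMap, ← ratFuncToLaurent_toRatFuncHom_C]
  simp [scaleAux, h]

lemma scaleExpansion_zv (J : Finset (Fin l)) (s : Fin l) :
    scaleExpansion J (zv s : RF k l) = HahnSeries.single (if s ∈ J then 1 else 0) (zv s) := by
  split_ifs with h
  exacts [scaleExpansion_zv_of_mem h, scaleExpansion_zv_of_notMem h]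

lemma pairExpansion_zv_sub_zv (hij : i ≠ j) :
    pairExpansion i j (zv i - zv j : RF k l) = HahnSeries.single 1 1 := by
  rw [map_sub, pairExpansion_zv_self, pairExpansion_zv_of_ne j hij.symm, add_sub_cancel_left]

lemma zv_ne_zero (s : Fin l) : (zv s : RF k l) ≠ 0 :=
  (map_ne_zero_iff _ (IsFractionRing.injective _ _)).2 (MvPolynomial.X_ne_zero s)

lemma zv_injective : Function.Injective (zv : Fin l → RF k l) :=
  (IsFractionRing.injective _ _).comp MvPolynomial.X_injective

lemma zv_sub_zv_ne_zero {s t : Fin l} (h : s ≠ t) : (zv s - zv t : RF k l) ≠ 0 :=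
  sub_ne_zero.2 (zv_injective.ne h)

end Expansion

section SubfieldOn

variable {k : Type} [Field k] {l : ℕ} {i j s : Fin l} {J S : Finset (Fin l)}

/-- The field `k(z_s : s ∈ S)` of functions depending only on the variables indexed by `S`. -/
def subfieldOn (k : Type) [Field k] {l : ℕ} (S : Finset (Fin l)) : IntermediateField k (RF k l) :=
  IntermediateField.adjoin k {x | ∃ i ∈ S, x = zv i}

lemma dependsOnlyOn_iff_mem_subfieldOn {x : RF k l} : dependsOnlyOn S x ↔ x ∈ subfieldOn k S :=
  Iff.rfl

lemma zv_mem_subfieldOn (hs : s ∈ S) : (zv s : RF k l) ∈ subfieldOn k S :=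
  IntermediateField.subset_adjoin _ _ ⟨s, hs, rfl⟩

lemma subfieldOn_univ : subfieldOn k (Finset.univ : Finset (Fin l)) = ⊤ := by
  refine eq_top_iff.2 fun x _ => ?_
  have polynomial_mem (p : MvPolynomial (Fin l) k) :
      algebraMap _ (RF k l) p ∈ subfieldOn k Finset.univ := by
    induction p using MvPolynomial.induction_on with
    | C a => exact IntermediateField.algebraMap_mem _ a
    | add p q hp hq => rw [map_add]; exact add_mem hp hq
    | mul_X p s hp => rw [map_mul]; exact mul_mem hp (zv_mem_subfieldOn (Finset.mem_univ s))
  obtain ⟨p, q, -, rfl⟩ := IsFractionRing.div_surjective (A := MvPolynomial (Fin l) k) x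
  exact div_mem (polynomial_mem p) (polynomial_mem q)

lemma algHom_eqOn_subfieldOn {L : Type*} [Field L] [Algebra k L] {φ ψ : RF k l →ₐ[k] L}
    (h : ∀ s ∈ S, φ (zv s) = ψ (zv s)) {x : RF k l} (hx : x ∈ subfieldOn k S) : φ x = ψ x := by
  refine RingHom.eqOn_field_closure (f := φ.toRingHom) (g := ψ.toRingHom) ?_ hx
  rintro _ (⟨c, rfl⟩ | ⟨s, hs, rfl⟩)
  · exact (φ.commutes c).trans (ψ.commutes c).symm
  · exact h s hs

/-- The embedding of `k(z₁,…,z_l)` into its Laurent series as constants. -/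
def constantExpansion (k : Type) [Field k] (l : ℕ) : RF k l →ₐ[k] LaurentSeries (RF k l) where
  __ := HahnSeries.C
  commutes' _ := rfl

lemma scaleExpansion_of_mem_subfieldOn (hJ : Disjoint S J) {x : RF k l} (hx : x ∈ subfieldOn k S) :
    scaleExpansion J x = HahnSeries.C x :=
  algHom_eqOn_subfieldOn (ψ := constantExpansion k l)
    (fun _ hs => scaleExpansion_zv_of_notMem (Finset.disjoint_left.1 hJ hs)) hx

lemma scaleExpansion_inter_of_mem_subfieldOn {x : RF k l} (hx : x ∈ subfieldOn k S) :
    scaleExpansion (J ∩ S) x = scaleExpansion J x := by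
  refine algHom_eqOn_subfieldOn (fun s hs => ?_) hx
  by_cases hJ : s ∈ J
  · rw [scaleExpansion_zv_of_mem hJ, scaleExpansion_zv_of_mem (Finset.mem_inter.2 ⟨hJ, hs⟩)]
  · rw [scaleExpansion_zv_of_notMem hJ,
      scaleExpansion_zv_of_notMem fun h => hJ (Finset.mem_inter.1 h).1]

lemma isHomogeneousOn_inter_of_mem_subfieldOn {d : ℤ} {x : RF k l} (hx : x ∈ subfieldOn k S)
    (hx_hom : IsHomogeneousOn J d x) : IsHomogeneousOn (J ∩ S) d x := by
  rw [isHomogeneousOn_iff] at hx_hom ⊢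
  rw [scaleExpansion_inter_of_mem_subfieldOn hx, hx_hom]

lemma map_derivation_eq_of_mem_adjoin {F L : Type*} [Field F] [Algebra k F] [Field L] [Algebra k L]
    (φ : F →ₐ[k] L) (d : Derivation k F F) (δ : Derivation k L L) {T : Set F}
    (h : ∀ x ∈ T, φ (d x) = δ (φ x)) {x : F} (hx : x ∈ IntermediateField.adjoin k T) :
    φ (d x) = δ (φ x) := by
  induction hx using IntermediateField.adjoin_induction with
  | mem x hx => exact h x hx
  | algebraMap c => simp
  | add x y _ _ hx hy => simp only [map_add, hx, hy]
  | inv x _ hx => simp [Derivation.leibniz_inv, hx]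
  | mul x y _ _ hx hy => simp [hx, hy]

lemma map_derivation_eq {L : Type*} [Field L] [Algebra k L] (φ : RF k l →ₐ[k] L)
    (d : Derivation k (RF k l) (RF k l)) (δ : Derivation k L L)
    (h : ∀ s, φ (d (zv s)) = δ (φ (zv s))) (x : RF k l) : φ (d x) = δ (φ x) :=
  map_derivation_eq_of_mem_adjoin (T := {x | ∃ i ∈ Finset.univ, x = zv i}) φ d δ
    (by rintro _ ⟨s, -, rfl⟩; exact h s) (subfieldOn_univ.ge trivial)

lemma derivation_ext {d e : Derivation k (RF k l) (RF k l)} (h : ∀ s, d (zv s) = e (zv s)) :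
    d = e :=
  Derivation.ext fun x => map_derivation_eq (AlgHom.id k (RF k l)) d e h x

end SubfieldOn

section VectorField

variable {k : Type} [Field k] {l : ℕ} {D : Fin l → Derivation k (RF k l) (RF k l)}
  {i j : Fin l} {S : Finset (Fin l)}

/-- The vector field `Σ_{s ∈ S} c_s ∂_{z_s}`. -/
def vectorField (D : Fin l → Derivation k (RF k l) (RF k l)) (S : Finset (Fin l))
    (c : Fin l → RF k l) : Derivation k (RF k l) (RF k l) :=
  ∑ s ∈ S, c s • D s

lemma vectorField_apply (c : Fin l → RF k l) (x : RF k l) :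
    vectorField D S c x = ∑ s ∈ S, c s * D s x := by
  change Derivation.coeFnAddMonoidHom (∑ s ∈ S, c s • D s) x = _
  rw [map_sum, Finset.sum_apply]
  rfl

lemma vectorField_zv (hD : IsPartialDeriv D) (c : Fin l → RF k l) (t : Fin l) :
    vectorField D S c (zv t) = if t ∈ S then c t else 0 := by
  simp [vectorField_apply, hD _ t]

lemma Delta_eq_vectorField (x : RF k l) : Delta D x = vectorField D Finset.univ 1 x := by
  simp [Delta, vectorField_apply]

lemma DeltaStar_eq_vectorField_add (w : Fin l → ℤ) (x : RF k l) :
    DeltaStar D w x =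
      vectorField D Finset.univ (fun s => zv s ^ 2) x + (∑ s, (w s : RF k l) * zv s) * x := by
  rw [DeltaStar, Finset.sum_add_distrib, vectorField_apply, Finset.sum_mul]

lemma partial_comm (hD : IsPartialDeriv D) (s t : Fin l) (x : RF k l) :
    D s (D t x) = D t (D s x) := by
  have h : ⁅D s, D t⁆ = 0 := derivation_ext fun u => by
    rw [Derivation.commutator_apply, hD, hD]
    split_ifs <;> simp
  exact sub_eq_zero.1 (by rw [← Derivation.commutator_apply, h, Derivation.zero_apply])

lemma Delta_partial (hD : IsPartialDeriv D) (s : Fin l) (x : RF k l) :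
    Delta D (D s x) = D s (Delta D x) := by
  simp only [Delta, map_sum, partial_comm hD s]

lemma rho_Delta (hD : IsPartialDeriv D) (i j : Fin l) (n : ℤ) (x : RF k l) :
    rho i j n (Delta D x) = Delta D (rho i j n x) := by
  rw [Delta_eq_vectorField, Delta_eq_vectorField, rho_eq_coeff, rho_eq_coeff,
    ← coeffDerivation_coeff]
  congr 1
  refine map_derivation_eq _ _ _ (fun s => ?_) x
  rcases eq_or_ne s i with rfl | hs
  · simp [vectorField_zv hD, pairExpansion_zv_self]
  · simp [vectorField_zv hD, pairExpansion_zv_of_ne j hs]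

lemma pairExpansion_partial (hD : IsPartialDeriv D) (hij : i ≠ j) (x : RF k l) :
    pairExpansion i j ((zv i - zv j) * D i x) =
      eulerDerivation k (RF k l) (pairExpansion i j x) := by
  refine map_derivation_eq (pairExpansion i j) ((zv i - zv j : RF k l) • D i) _ (fun s => ?_) x
  rw [Derivation.smul_apply, smul_eq_mul, map_mul, pairExpansion_zv_sub_zv hij]
  rcases eq_or_ne s i with rfl | hs
  · simp [hD _ s, pairExpansion_zv_self]
  · simp [hD _ s, pairExpansion_zv_of_ne j hs, hs]

lemma rho_sub_one_partial (hD : IsPartialDeriv D) (hij : i ≠ j) (n : ℤ) (x : RF k l) :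
    rho i j (n - 1) (D i x) = n * rho i j n x := by
  have h := congrArg (fun f => f.coeff n) (pairExpansion_partial hD hij x)
  simpa [pairExpansion_zv_sub_zv hij, HahnSeries.coeff_single_mul, rho_eq_coeff, -map_sub] using h

lemma scaleExpansion_vectorField_zv (hD : IsPartialDeriv D) (J S : Finset (Fin l)) (x : RF k l) :
    scaleExpansion J (vectorField D S zv x) =
      coeffDerivation (vectorField D S zv) (scaleExpansion J x) := by
  refine map_derivation_eq _ _ _ (fun s => ?_) x
  by_cases hJ : s ∈ J <;> by_cases hS : s ∈ S <;>
    simp [vectorField_zv hD, hS, hJ, scaleExpansion_zv_of_mem, scaleExpansion_zv_of_notMem]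

lemma scaleExpansion_partial (hD : IsPartialDeriv D) (J : Finset (Fin l)) (s : Fin l) (n : ℤ)
    (x : RF k l) :
    (scaleExpansion J (D s x)).coeff (n - if s ∈ J then 1 else 0) =
      D s ((scaleExpansion J x).coeff n) := by
  have h := congrArg (fun f => f.coeff n) (scaleExpansion_vectorField_zv hD J {s} x)
  simp only [vectorField_apply, Finset.sum_singleton, coeffDerivation_coeff, map_mul] at h
  refine mul_left_cancel₀ (zv_ne_zero s) (h ▸ ?_)
  by_cases hs : s ∈ J
  · simp [scaleExpansion_zv_of_mem hs, HahnSeries.coeff_single_mul, hs]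
  · simp [scaleExpansion_zv_of_notMem hs, hs]

lemma vectorField_zv_coeff_scaleExpansion (hD : IsPartialDeriv D) (J : Finset (Fin l)) (n : ℤ)
    (x : RF k l) :
    vectorField D J zv ((scaleExpansion J x).coeff n) = n * (scaleExpansion J x).coeff n := by
  have h : scaleExpansion J (vectorField D J zv x) =
      eulerDerivation k (RF k l) (scaleExpansion J x) := by
    refine map_derivation_eq _ _ _ (fun s => ?_) x
    by_cases hJ : s ∈ J
    · simp [vectorField_zv hD, hJ, scaleExpansion_zv_of_mem hJ]
    · simp [vectorField_zv hD, hJ, scaleExpansion_zv_of_notMem hJ]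
  rw [← coeffDerivation_coeff, ← scaleExpansion_vectorField_zv hD, h, eulerDerivation_coeff]

lemma vectorField_zv_of_isHomogeneousOn (hD : IsPartialDeriv D) {d : ℤ} {x : RF k l}
    (hx : IsHomogeneousOn S d x) : vectorField D S zv x = d * x := by
  have h := vectorField_zv_coeff_scaleExpansion hD S d x
  rwa [isHomogeneousOn_iff.1 hx, HahnSeries.coeff_single_same] at h

lemma scaleExpansion_singleton_Delta (hD : IsPartialDeriv D) (j : Fin l) (n : ℤ) (x : RF k l) :
    (scaleExpansion {j} (Delta D x)).coeff n =
      D j ((scaleExpansion {j} x).coeff (n + 1)) +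
        ∑ s ∈ {j}ᶜ, D s ((scaleExpansion {j} x).coeff n) := by
  rw [Delta, map_sum, HahnSeries.coeff_sum, Fintype.sum_eq_add_sum_compl j]
  congr 1
  · simpa using scaleExpansion_partial hD {j} j (n + 1) x
  · refine Finset.sum_congr rfl fun s hs => ?_
    simpa [Finset.mem_compl.1 hs] using scaleExpansion_partial hD {j} s n x

lemma pairExpansion_vectorField_sq (hD : IsPartialDeriv D) (hij : i ≠ j) (x : RF k l) :
    pairExpansion i j (vectorField D Finset.univ (fun s => zv s ^ 2) x) =
      coeffDerivation (vectorField D {i}ᶜ fun s => zv s ^ 2) (pairExpansion i j x) +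
        pairExpansion i j (zv i + zv j) * eulerDerivation k (RF k l) (pairExpansion i j x) := by
  have h := map_derivation_eq (pairExpansion i j)
    (vectorField D Finset.univ (fun s => zv s ^ 2) - ((zv i ^ 2 - zv j ^ 2 : RF k l) • D i))
    (coeffDerivation (vectorField D {i}ᶜ fun s => zv s ^ 2)) (fun s => ?_) x
  · rw [← h, ← pairExpansion_partial hD hij, ← map_mul, ← map_add]
    congr 1
    simp only [Derivation.sub_apply, Derivation.smul_apply, smul_eq_mul]
    ring
  · rcases eq_or_ne s i with rfl | hs
    · simp [vectorField_zv hD, hD _ s, pairExpansion_zv_self, pairExpansion_zv_of_ne _ hij.symm,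
        hij.symm]
    · simp [vectorField_zv hD, hD _ s, pairExpansion_zv_of_ne j hs, hs]

lemma rho_add (i j : Fin l) (m : ℤ) (x y : RF k l) :
    rho i j m (x + y) = rho i j m x + rho i j m y := by
  simp [rho_eq_coeff]

lemma rho_zero (i j : Fin l) (m : ℤ) : rho i j m (0 : RF k l) = 0 := by
  simp [rho_eq_coeff]

lemma rho_intCast_mul (i j : Fin l) (m n : ℤ) (x : RF k l) :
    rho i j m ((n : RF k l) * x) = (n : RF k l) * rho i j m x := by
  rw [rho_eq_coeff, map_mul, map_intCast, ← map_intCast HahnSeries.C, HahnSeries.C_apply,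
    HahnSeries.coeff_single_zero_mul, rho_eq_coeff]

lemma rho_zv_mul_of_ne (j : Fin l) {s : Fin l} (hs : s ≠ i) (m : ℤ) (x : RF k l) :
    rho i j m (zv s * x) = zv s * rho i j m x := by
  simp [rho_eq_coeff, pairExpansion_zv_of_ne j hs]

lemma rho_zv_mul_self (i j : Fin l) (m : ℤ) (x : RF k l) :
    rho i j m (zv i * x) = zv j * rho i j m x + rho i j (m - 1) x := by
  simp [rho_eq_coeff, pairExpansion_zv_self, add_mul, HahnSeries.coeff_single_mul]

lemma rho_vectorField_sq (hD : IsPartialDeriv D) (hij : i ≠ j) (m : ℤ) (x : RF k l) :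
    rho i j m (vectorField D Finset.univ (fun s => zv s ^ 2) x) =
      vectorField D {i}ᶜ (fun s => zv s ^ 2) (rho i j m x) +
        ((2 * m : RF k l) * zv j * rho i j m x + (m - 1 : RF k l) * rho i j (m - 1) x) := by
  rw [rho_eq_coeff, pairExpansion_vectorField_sq hD hij, map_add, pairExpansion_zv_self,
    pairExpansion_zv_of_ne j hij.symm]
  simp only [HahnSeries.coeff_add, coeffDerivation_coeff, add_mul, HahnSeries.C_apply,
    HahnSeries.coeff_single_mul, eulerDerivation_coeff, ← rho_eq_coeff, sub_zero]
  push_cast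
  ring

lemma rho_DeltaStar (hD : IsPartialDeriv D) (hij : i ≠ j) (w : Fin l → ℤ) (m : ℤ) (x : RF k l) :
    rho i j m (DeltaStar D w x) =
      ∑ s ∈ {i}ᶜ, (zv s ^ 2 * D s (rho i j m x) + (w s : RF k l) * zv s * rho i j m x) +
        ((2 * m + w i : RF k l) * zv j * rho i j m x +
          (m - 1 + w i : RF k l) * rho i j (m - 1) x) := by
  have h : DeltaStar D w x = vectorField D Finset.univ (fun s => zv s ^ 2) x +
      ((w i : RF k l) * (zv i * x) + ∑ s ∈ {i}ᶜ, (w s : RF k l) * (zv s * x)) := by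
    rw [← Fintype.sum_eq_add_sum_compl i fun s => (w s : RF k l) * (zv s * x)]
    simp only [DeltaStar, vectorField_apply, Finset.sum_add_distrib, mul_assoc]
  have h_sum : rho i j m (∑ s ∈ {i}ᶜ, (w s : RF k l) * (zv s * x)) =
      ∑ s ∈ {i}ᶜ, (w s : RF k l) * zv s * rho i j m x := by
    rw [rho_eq_coeff, map_sum, HahnSeries.coeff_sum]
    refine Finset.sum_congr rfl fun s hs => ?_
    rw [← rho_eq_coeff, rho_intCast_mul, rho_zv_mul_of_ne j (by simpa using hs), mul_assoc]
  rw [h, rho_add, rho_add, h_sum, rho_intCast_mul, rho_zv_mul_self, rho_vectorField_sq hD hij,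
    vectorField_apply, Finset.sum_add_distrib]
  ring

end VectorField

section Phi

variable {k : Type} [Field k] {l : ℕ}

lemma exists_pow_mul_mem_of_mem_adjoin {F : Type*} [CommRing F] [Algebra k F] {A : Subalgebra k F}
    {X : Set F} {u : F} (hu : u ∈ A) (hX : ∀ x ∈ X, ∃ n : ℕ, u ^ n * x ∈ A) {x : F}
    (hx : x ∈ Algebra.adjoin k X) : ∃ n : ℕ, u ^ n * x ∈ A := by
  induction hx using Algebra.adjoin_induction with
  | mem x hx => exact hX x hx
  | algebraMap c => exact ⟨0, by simp⟩
  | add x y _ _ hx hy =>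
    obtain ⟨m, hm⟩ := hx
    obtain ⟨n, hn⟩ := hy
    refine ⟨m + n, ?_⟩
    convert add_mem (mul_mem (pow_mem hu n) hm) (mul_mem (pow_mem hu m) hn) using 1
    ring
  | mul x y _ _ hx hy =>
    obtain ⟨m, hm⟩ := hx
    obtain ⟨n, hn⟩ := hy
    refine ⟨m + n, ?_⟩
    convert mul_mem hm hn using 1
    ring

/-- The algebra of functions with poles only along the hyperplanes `z_s = z_t`, `(s, t) ∈ T`. -/
def poleAlgebra (k : Type) [Field k] {l : ℕ} (T : Set (Fin l × Fin l)) : Subalgebra k (RF k l) :=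
  Algebra.adjoin k (Set.range zv ∪ (fun p => (zv p.1 - zv p.2)⁻¹) '' T)

variable {T : Set (Fin l × Fin l)}

lemma zv_mem_poleAlgebra (s : Fin l) : (zv s : RF k l) ∈ poleAlgebra k T :=
  Algebra.subset_adjoin (Or.inl ⟨s, rfl⟩)

lemma inv_zv_sub_zv_mem_poleAlgebra {p : Fin l × Fin l} (hp : p ∈ T) :
    (zv p.1 - zv p.2 : RF k l)⁻¹ ∈ poleAlgebra k T :=
  Algebra.subset_adjoin (Or.inr ⟨p, hp, rfl⟩)

lemma algebraMap_mem_poleAlgebra (p : MvPolynomial (Fin l) k) :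
    algebraMap _ (RF k l) p ∈ poleAlgebra k T := by
  induction p using MvPolynomial.induction_on with
  | C a => exact Subalgebra.algebraMap_mem _ a
  | add p q hp hq => rw [map_add]; exact add_mem hp hq
  | mul_X p s hp => rw [map_mul]; exact mul_mem hp (zv_mem_poleAlgebra s)

/-- The product `∏_{s < t} (z_s - z_t)`, a common denominator for `Φ`. -/
def discriminantRoot (k : Type) [Field k] (l : ℕ) : MvPolynomial (Fin l) k :=
  ∏ s, ∏ t, if s < t then MvPolynomial.X s - MvPolynomial.X t else 1

lemma X_sub_X_dvd_discriminantRoot {s t : Fin l} (hst : s ≠ t) :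
    (MvPolynomial.X s - MvPolynomial.X t) ∣ discriminantRoot k l := by
  have dvd_of_lt {s t : Fin l} (h : s < t) :
      (MvPolynomial.X s - MvPolynomial.X t) ∣ discriminantRoot k l := by
    have ht := Finset.dvd_prod_of_mem
      (fun t => if s < t then (MvPolynomial.X s - MvPolynomial.X t : MvPolynomial (Fin l) k) else 1)
      (Finset.mem_univ t)
    rw [if_pos h] at ht
    exact ht.trans (Finset.dvd_prod_of_mem _ (Finset.mem_univ s))
  rcases hst.lt_or_gt with h | h
  · exact dvd_of_lt h
  · rw [← neg_sub, neg_dvd]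
    exact dvd_of_lt h

lemma algebraMap_discriminantRoot_zpow (n : ℤ) :
    algebraMap _ (RF k l) (discriminantRoot k l) ^ n =
      ∏ s, ∏ t, if s < t then (zv s - zv t) ^ n else 1 := by
  simp_rw [discriminantRoot, map_prod, ← Finset.prod_zpow]
  refine Finset.prod_congr rfl fun s _ => Finset.prod_congr rfl fun t _ => ?_
  split_ifs <;> simp [zv]

lemma algebraMap_discriminantRoot_ne_zero :
    algebraMap _ (RF k l) (discriminantRoot k l) ≠ 0 := by
  rw [← zpow_one (algebraMap _ _ _), algebraMap_discriminantRoot_zpow]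
  refine Finset.prod_ne_zero_iff.2 fun s _ => Finset.prod_ne_zero_iff.2 fun t _ => ?_
  split_ifs with h
  · exact zpow_ne_zero _ (zv_sub_zv_ne_zero h.ne)
  · exact one_ne_zero

lemma mem_Phi_iff {x : RF k l} : x ∈ Phi k l ↔ x ∈ poleAlgebra k Set.univ := by
  constructor
  · rintro ⟨p, e, rfl⟩
    refine mul_mem (algebraMap_mem_poleAlgebra p) (prod_mem fun s _ => prod_mem fun t _ => ?_)
    split_ifs
    · obtain ⟨n, hn | hn⟩ := (e s t).eq_nat_or_neg
      · rw [hn, zpow_natCast]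
        exact pow_mem (sub_mem (zv_mem_poleAlgebra s) (zv_mem_poleAlgebra t)) n
      · rw [hn, zpow_neg, zpow_natCast, ← inv_pow]
        exact pow_mem (inv_zv_sub_zv_mem_poleAlgebra (p := (s, t)) (Set.mem_univ _)) n
    · exact one_mem _
  · intro hx
    let polynomials := (IsScalarTower.toAlgHom k (MvPolynomial (Fin l) k) (RF k l)).range
    obtain ⟨n, p, hp⟩ : ∃ n : ℕ,
        algebraMap _ (RF k l) (discriminantRoot k l) ^ n * x ∈ polynomials := by
      refine exists_pow_mul_mem_of_mem_adjoin (A := polynomials) ⟨_, rfl⟩ ?_ hx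
      rintro _ (⟨s, rfl⟩ | ⟨⟨s, t⟩, -, rfl⟩)
      · exact ⟨0, MvPolynomial.X s, by simp [zv]⟩
      · rcases eq_or_ne s t with rfl | hst
        · exact ⟨0, 0, by simp⟩
        · obtain ⟨q, hq⟩ := X_sub_X_dvd_discriminantRoot (k := k) hst
          refine ⟨1, q, (eq_mul_inv_iff_mul_eq₀ (zv_sub_zv_ne_zero hst)).2 ?_⟩
          simp [hq, zv, mul_comm]
    refine ⟨p, fun _ _ => -n, ?_⟩
    rw [← algebraMap_discriminantRoot_zpow, zpow_neg, zpow_natCast]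
    refine (eq_mul_inv_iff_mul_eq₀ (pow_ne_zero n algebraMap_discriminantRoot_ne_zero)).2 ?_
    rw [mul_comm]
    exact hp.symm

/-- The pairs `(s, t)` with `{s, t} ≠ {i, j}`. -/
def otherPairs {l : ℕ} (i j : Fin l) : Set (Fin l × Fin l) := {(i, j), (j, i)}ᶜ

lemma exists_zpow_mul_of_mem_Phi {i j : Fin l} (hij : i ≠ j) {x : RF k l} (hx : x ∈ Phi k l) :
    ∃ e : ℤ, ∃ y ∈ poleAlgebra k (otherPairs i j), x = (zv i - zv j) ^ e * y := by
  have hne : (zv i - zv j : RF k l) ≠ 0 := zv_sub_zv_ne_zero hij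
  obtain ⟨n, hn⟩ : ∃ n : ℕ, (zv i - zv j) ^ n * x ∈ poleAlgebra k (otherPairs i j) := by
    refine exists_pow_mul_mem_of_mem_adjoin
      (sub_mem (zv_mem_poleAlgebra i) (zv_mem_poleAlgebra j)) ?_ (mem_Phi_iff.1 hx)
    rintro _ (⟨s, rfl⟩ | ⟨p, -, rfl⟩)
    · exact ⟨0, by simpa using zv_mem_poleAlgebra s⟩
    · by_cases hp : p ∈ otherPairs i j
      · exact ⟨0, by simpa using inv_zv_sub_zv_mem_poleAlgebra hp⟩
      · rcases not_not.1 hp with rfl | rfl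
        · exact ⟨1, by simp [hne]⟩
        · refine ⟨1, ?_⟩
          have h : (zv i - zv j : RF k l) * (zv j - zv i)⁻¹ = -1 := by
            rw [← neg_sub (zv i), inv_neg, mul_neg, mul_inv_cancel₀ hne]
          simp [h]
  refine ⟨-n, _, hn, ?_⟩
  rw [zpow_neg, zpow_natCast, inv_mul_cancel_left₀ (pow_ne_zero n hne)]

lemma derivation_mem_poleAlgebra {d : Derivation k (RF k l) (RF k l)}
    (hd : ∀ s, d (zv s) ∈ poleAlgebra k T) {x : RF k l} (hx : x ∈ poleAlgebra k T) :
    d x ∈ poleAlgebra k T := by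
  induction hx using Algebra.adjoin_induction with
  | mem x hx =>
    rcases hx with ⟨s, rfl⟩ | ⟨p, hp, rfl⟩
    · exact hd s
    · rw [Derivation.leibniz_inv, map_sub]
      exact mul_mem (neg_mem (pow_mem (inv_zv_sub_zv_mem_poleAlgebra hp) 2))
        (sub_mem (hd _) (hd _))
  | algebraMap c => simp
  | add x y _ _ hx hy => rw [map_add]; exact add_mem hx hy
  | mul x y hx' hy' hx hy =>
    rw [Derivation.leibniz]
    exact add_mem (mul_mem hx' hy) (mul_mem hy' hx)

end Phi

section TranslationInvariance

lemma iterate_derivation_mul_eq_zero {k F : Type*} [CommRing k] [CommRing F] [Algebra k F]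
    (d : Derivation k F F) {m n : ℕ} {x y : F} (hx : d^[m] x = 0) (hy : d^[n] y = 0) :
    d^[m + n] (x * y) = 0 := by
  induction hN : m + n generalizing m n x y with
  | zero =>
    obtain ⟨rfl, rfl⟩ : m = 0 ∧ n = 0 := by lia
    simp_all
  | succ N ih =>
    rcases m with - | m
    · rw [show x = 0 from hx, zero_mul, iterate_map_zero]
    rcases n with - | n
    · rw [show y = 0 from hy, mul_zero, iterate_map_zero]
    rw [Function.iterate_succ_apply, Derivation.leibniz, iterate_map_add, smul_eq_mul, smul_eq_mul,
      ih hx (n := n) hy (by lia), ih hy (n := m) hx (by lia), add_zero]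

/-- The algebra of elements annihilated by some power of the derivation `d`. -/
def nilpotencyAlgebra {k F : Type*} [CommRing k] [CommRing F] [Algebra k F]
    (d : Derivation k F F) : Subalgebra k F where
  carrier := {x | ∃ n : ℕ, d^[n] x = 0}
  mul_mem' := fun ⟨_, hx⟩ ⟨_, hy⟩ => ⟨_, iterate_derivation_mul_eq_zero d hx hy⟩
  add_mem' := fun {x y} ⟨m, hx⟩ ⟨n, hy⟩ => ⟨m + n, by
    have hx' : d^[m + n] x = 0 := by
      rw [add_comm, Function.iterate_add_apply, hx, iterate_map_zero]
    have hy' : d^[m + n] y = 0 := by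
      rw [Function.iterate_add_apply, hy, iterate_map_zero]
    rw [iterate_map_add, hx', hy', add_zero]⟩
  algebraMap_mem' c := ⟨1, d.map_algebraMap c⟩

variable {k : Type} [Field k] {l : ℕ} {D : Fin l → Derivation k (RF k l) (RF k l)}

lemma exists_iterate_Delta_eq_zero (hD : IsPartialDeriv D) {x : RF k l} (hx : x ∈ Phi k l) :
    ∃ n : ℕ, (Delta D)^[n] x = 0 := by
  rw [show Delta D = vectorField D Finset.univ 1 from funext Delta_eq_vectorField]
  have h : poleAlgebra k Set.univ ≤ nilpotencyAlgebra (vectorField D Finset.univ 1) := by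
    refine Algebra.adjoin_le ?_
    rintro _ (⟨s, rfl⟩ | ⟨p, -, rfl⟩)
    · exact ⟨2, by simp [vectorField_zv hD]⟩
    · exact ⟨1, by simp [vectorField_zv hD, Derivation.leibniz_inv]⟩
  exact h (mem_Phi_iff.1 hx)

lemma vectorField_zv_Delta (hD : IsPartialDeriv D) (x : RF k l) :
    vectorField D Finset.univ zv (Delta D x) =
      Delta D (vectorField D Finset.univ zv x) - Delta D x := by
  have h : ⁅vectorField D Finset.univ zv, vectorField D Finset.univ 1⁆ =
      -vectorField D Finset.univ 1 :=
    derivation_ext fun s => by simp [Derivation.commutator_apply, vectorField_zv hD]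
  simp only [Delta_eq_vectorField]
  have h_apply := DFunLike.congr_fun h x
  rw [Derivation.commutator_apply, Derivation.neg_apply] at h_apply
  linear_combination h_apply

lemma DeltaStar_Delta (hD : IsPartialDeriv D) (w : Fin l → ℤ) (x : RF k l) :
    DeltaStar D w (Delta D x) = Delta D (DeltaStar D w x) -
      (2 * vectorField D Finset.univ zv x + (∑ s, w s : ℤ) * x) := by
  have h : ⁅vectorField D Finset.univ fun s => zv s ^ 2, vectorField D Finset.univ 1⁆ =
      (-2 : ℤ) • vectorField D Finset.univ zv :=
    derivation_ext fun s => by simp [Derivation.commutator_apply, vectorField_zv hD]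
  have h_apply := DFunLike.congr_fun h x
  rw [Derivation.commutator_apply, Derivation.smul_apply, zsmul_eq_mul] at h_apply
  have h_weight : Delta D (∑ s, (w s : RF k l) * zv s) = (∑ s, w s : ℤ) := by
    simp [Delta_eq_vectorField, vectorField_zv hD]
  simp only [DeltaStar_eq_vectorField_add]
  simp only [Delta_eq_vectorField, map_add, Derivation.leibniz, smul_eq_mul] at h_weight ⊢
  rw [h_weight]
  push_cast at h_apply ⊢
  linear_combination h_apply

lemma Delta_intCast_mul (n : ℤ) (x : RF k l) : Delta D (n * x) = n * Delta D x := by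
  simp [Delta_eq_vectorField]

lemma vectorField_zv_iterate_Delta (hD : IsPartialDeriv D) {d : ℤ} {x : RF k l}
    (hx : vectorField D Finset.univ zv x = d * x) (n : ℕ) :
    vectorField D Finset.univ zv ((Delta D)^[n] x) = (d - n : ℤ) * (Delta D)^[n] x := by
  induction n with
  | zero => simpa using hx
  | succ n ih =>
    rw [Function.iterate_succ_apply', vectorField_zv_Delta hD, ih, Delta_intCast_mul]
    push_cast
    ring

/-- The `sl₂`-identity `e fⁿ⁺¹ v = (n + 1)(μ - n) fⁿ v` for `e = Δ*`, `f = -Δ` and a vector `v` of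
weight `μ = 0` killed by `e`. -/
lemma DeltaStar_iterate_Delta (hD : IsPartialDeriv D) {w : Fin l → ℤ} {d : ℤ} {x : RF k l}
    (hd : 2 * d + ∑ s, w s = 0) (hx_reg : DeltaStar D w x = 0)
    (hx_hom : vectorField D Finset.univ zv x = d * x) (n : ℕ) :
    DeltaStar D w ((Delta D)^[n + 1] x) = (n * (n + 1) : ℤ) * (Delta D)^[n] x := by
  have hw : ∑ s, w s = -2 * d := by linarith
  rw [Function.iterate_succ_apply', DeltaStar_Delta hD, vectorField_zv_iterate_Delta hD hx_hom, hw]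
  cases n with
  | zero => simp [hx_reg, Delta_eq_vectorField, mul_assoc]
  | succ n =>
    rw [DeltaStar_iterate_Delta hD hd hx_reg hx_hom n, Delta_intCast_mul,
      ← Function.iterate_succ_apply' (Delta D)]
    push_cast
    ring

lemma Delta_eq_zero [CharZero k] (hD : IsPartialDeriv D) {w : Fin l → ℤ} {d : ℤ}
    {x : RF k l} (hd : 2 * d + ∑ s, w s = 0) (hx : x ∈ Phi k l) (hx_reg : DeltaStar D w x = 0)
    (hx_hom : IsHomogeneousOn Finset.univ d x) : Delta D x = 0 := by
  obtain ⟨N, hN⟩ := exists_iterate_Delta_eq_zero hD hx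
  induction N with
  | zero =>
    rw [show x = 0 from hN]
    simp [Delta]
  | succ N ih =>
    rcases N with - | N
    · exact hN
    have h := DeltaStar_iterate_Delta hD hd hx_reg (vectorField_zv_of_isHomogeneousOn hD hx_hom)
      (N + 1)
    have h_zero : DeltaStar D w 0 = 0 := by simp [DeltaStar]
    rw [hN, h_zero, eq_comm, mul_eq_zero] at h
    exact ih (h.resolve_left (by norm_cast))

end TranslationInvariance

section Coefficients

variable {k : Type} [Field k] {l : ℕ} {i j : Fin l} {J : Finset (Fin l)}
  {x y : RF k l}

lemma pairExpansion_zv (i j s : Fin l) : pairExpansion i j (zv s : RF k l) =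
    HahnSeries.C (zv (Function.update id i j s)) +
      if s = i then HahnSeries.single 1 1 else 0 := by
  rcases eq_or_ne s i with rfl | hs
  · simp [pairExpansion_zv_self]
  · simp [pairExpansion_zv_of_ne j hs, hs]

lemma rho_zero_zv (i j s : Fin l) : rho i j 0 (zv s : RF k l) = zv (Function.update id i j s) := by
  rw [rho_eq_coeff, pairExpansion_zv]
  split_ifs <;> simp [HahnSeries.coeff_single_of_ne]

lemma eq_of_update_id_eq {s t : Fin l} (hst : (s, t) ∈ otherPairs i j)
    (h : Function.update id i j s = Function.update id i j t) : s = t := by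
  simp only [otherPairs, Set.mem_compl_iff, Set.mem_insert_iff, Set.mem_singleton_iff,
    Prod.mk.injEq, not_or, not_and] at hst
  simp only [Function.update_apply, id] at h
  grind

lemma update_id_ne (hij : i ≠ j) (s : Fin l) : Function.update id i j s ≠ i := by
  rw [Function.update_apply]
  split_ifs with h
  exacts [hij.symm, h]

/-- The ring of functions in `Φ` that do not involve `z_i`. -/
def phiSubringAvoiding (k : Type) [Field k] {l : ℕ} (i : Fin l) : Subring (RF k l) :=
  (poleAlgebra k Set.univ ⊓ (subfieldOn k {i}ᶜ).toSubalgebra).toSubring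

lemma zv_mem_phiSubringAvoiding {s : Fin l} (hs : s ≠ i) : zv s ∈ phiSubringAvoiding k i :=
  ⟨zv_mem_poleAlgebra s, zv_mem_subfieldOn (by simpa using hs)⟩

lemma inv_zv_sub_zv_mem_phiSubringAvoiding {s t : Fin l} (hs : s ≠ i) (ht : t ≠ i) :
    (zv s - zv t)⁻¹ ∈ phiSubringAvoiding k i :=
  ⟨inv_zv_sub_zv_mem_poleAlgebra (p := (s, t)) (Set.mem_univ _),
    inv_mem (S := IntermediateField k (RF k l)) <|
      sub_mem (zv_mem_subfieldOn (by simpa using hs)) (zv_mem_subfieldOn (by simpa using ht))⟩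

lemma pairExpansion_zv_mem_integralSubring (hij : i ≠ j) (s : Fin l) :
    pairExpansion i j (zv s) ∈ integralSubring (phiSubringAvoiding k i) := by
  rw [pairExpansion_zv]
  refine add_mem (C_mem_integralSubring (zv_mem_phiSubringAvoiding (update_id_ne hij s))) ?_
  split_ifs
  exacts [single_one_mem_integralSubring (one_mem _), zero_mem _]

lemma pairExpansion_mem_integralSubring (hij : i ≠ j) (hy : y ∈ poleAlgebra k (otherPairs i j)) :
    pairExpansion i j y ∈ integralSubring (phiSubringAvoiding k i) := by
  induction hy using Algebra.adjoin_induction with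
  | mem x hx =>
    rcases hx with ⟨s, rfl⟩ | ⟨⟨s, t⟩, hst, rfl⟩
    · exact pairExpansion_zv_mem_integralSubring hij s
    · rcases eq_or_ne s t with rfl | hne
      · simp
      have h0 : (pairExpansion i j (zv s - zv t : RF k l)).coeff 0 =
          zv (Function.update id i j s) - zv (Function.update id i j t) := by
        rw [map_sub, HahnSeries.coeff_sub, ← rho_eq_coeff, ← rho_eq_coeff, rho_zero_zv, rho_zero_zv]
      rw [map_inv₀]
      refine inv_mem_integralSubring ?_ ?_ ?_
      · rw [map_sub]
        exact sub_mem (pairExpansion_zv_mem_integralSubring hij s)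
          (pairExpansion_zv_mem_integralSubring hij t)
      · rw [h0]
        exact zv_sub_zv_ne_zero fun h => hne (eq_of_update_id_eq hst h)
      · rw [h0]
        exact inv_zv_sub_zv_mem_phiSubringAvoiding (update_id_ne hij s) (update_id_ne hij t)
  | algebraMap c =>
    rw [AlgHom.commutes]
    exact C_mem_integralSubring ⟨Subalgebra.algebraMap_mem _ c, Subalgebra.algebraMap_mem _ c⟩
  | add x y _ _ hx hy => rw [map_add]; exact add_mem hx hy
  | mul x y _ _ hx hy => rw [map_mul]; exact mul_mem hx hy

lemma rho_zpow_mul (hij : i ≠ j) (e n : ℤ) (y : RF k l) :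
    rho i j n ((zv i - zv j) ^ e * y) = rho i j (n - e) y := by
  rw [rho_eq_coeff, map_mul, map_zpow₀, pairExpansion_zv_sub_zv hij, single_zpow]
  simp [HahnSeries.coeff_single_mul, rho_eq_coeff]

lemma rho_mem_phiSubringAvoiding (hij : i ≠ j) (n : ℤ) (hx : x ∈ Phi k l) :
    rho i j n x ∈ phiSubringAvoiding k i := by
  obtain ⟨e, y, hy, rfl⟩ := exists_zpow_mul_of_mem_Phi hij hx
  rw [rho_zpow_mul hij]
  exact integralSubring_le_coeffSubring (pairExpansion_mem_integralSubring hij hy) _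

lemma rho_mem_Phi (hij : i ≠ j) (n : ℤ) (hx : x ∈ Phi k l) : rho i j n x ∈ Phi k l :=
  mem_Phi_iff.2 (rho_mem_phiSubringAvoiding hij n hx).1

lemma rho_mem_subfieldOn (hij : i ≠ j) (n : ℤ) (hx : x ∈ Phi k l) :
    rho i j n x ∈ subfieldOn k {i}ᶜ :=
  (rho_mem_phiSubringAvoiding hij n hx).2

/-- The ring of functions with no pole along `z_i = z_j`. -/
def regularSubring (k : Type) [Field k] {l : ℕ} (i j : Fin l) : Subring (RF k l) :=
  (integralSubring ⊤).comap (pairExpansion (k := k) i j).toRingHom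

lemma mem_regularSubring_iff :
    x ∈ regularSubring k i j ↔ pairExpansion i j x ∈ integralSubring ⊤ :=
  Iff.rfl

lemma mem_regularSubring_of_mem_poleAlgebra (hij : i ≠ j)
    (hy : y ∈ poleAlgebra k (otherPairs i j)) : y ∈ regularSubring k i j :=
  mem_regularSubring_iff.2 <|
    integralSubring_mono le_top (pairExpansion_mem_integralSubring hij hy)

lemma rho_eq_zero_of_mem_regularSubring (hx : x ∈ regularSubring k i j) {n : ℤ} (hn : n < 0) :
    rho i j n x = 0 :=
  coeff_eq_zero_of_mem_integralSubring (mem_regularSubring_iff.1 hx) hn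

lemma rho_zero_mul (hx : x ∈ regularSubring k i j) (hy : y ∈ regularSubring k i j) :
    rho i j 0 (x * y) = rho i j 0 x * rho i j 0 y := by
  rw [rho_eq_coeff, map_mul, coeff_zero_mul_of_mem_integralSubring (mem_regularSubring_iff.1 hx)
    (mem_regularSubring_iff.1 hy), rho_eq_coeff, rho_eq_coeff]

lemma inv_zv_mem_regularSubring (hij : i ≠ j) (s : Fin l) :
    (zv s : RF k l)⁻¹ ∈ regularSubring k i j := by
  rw [mem_regularSubring_iff, map_inv₀]
  refine inv_mem_integralSubring (integralSubring_mono le_top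
    (pairExpansion_zv_mem_integralSubring hij s)) ?_ trivial
  rw [← rho_eq_coeff, rho_zero_zv]
  exact zv_ne_zero _

end Coefficients

section Commutation

variable {k : Type} [Field k] {l : ℕ} {i j : Fin l} {J : Finset (Fin l)} {x y : RF k l}

lemma scaleExpansion_inv_zv_sub_zv_mem_coeffSubring {V : Subring (RF k l)} {s t : Fin l}
    (hV : ∀ u, zv u ∈ V) (hV_inv : ∀ u, (zv u)⁻¹ ∈ V) (hst : (zv s - zv t)⁻¹ ∈ V) :
    scaleExpansion J (zv s - zv t)⁻¹ ∈ coeffSubring V := by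
  have mem_of_mem_of_notMem {s t : Fin l} (hs : s ∈ J) (ht : t ∉ J) :
      scaleExpansion J (zv t - zv s)⁻¹ ∈ coeffSubring V := by
    have h : scaleExpansion J (zv t - zv s : RF k l) =
        HahnSeries.C (zv t) - HahnSeries.single 1 (zv s) := by
      rw [map_sub, scaleExpansion_zv_of_mem hs, scaleExpansion_zv_of_notMem ht]
    rw [map_inv₀]
    refine integralSubring_le_coeffSubring (inv_mem_integralSubring ?_ ?_ ?_)
    · rw [h]
      exact sub_mem (C_mem_integralSubring (hV t)) (single_one_mem_integralSubring (hV s))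
    · simpa [h, HahnSeries.coeff_single_of_ne] using zv_ne_zero t
    · simpa [h, HahnSeries.coeff_single_of_ne] using hV_inv t
  by_cases hs : s ∈ J <;> by_cases ht : t ∈ J
  · rw [map_inv₀, map_sub, scaleExpansion_zv_of_mem hs, scaleExpansion_zv_of_mem ht,
      ← HahnSeries.single_sub, HahnSeries.inv_single]
    exact single_mem_coeffSubring _ hst
  · rw [← neg_sub, inv_neg, map_neg]
    exact neg_mem (mem_of_mem_of_notMem hs ht)
  · exact mem_of_mem_of_notMem ht hs
  · rw [map_inv₀, map_sub, scaleExpansion_zv_of_notMem hs, scaleExpansion_zv_of_notMem ht,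
      ← map_sub, HahnSeries.C_apply, HahnSeries.inv_single]
    exact single_mem_coeffSubring _ hst

lemma scaleExpansion_mem_coeffSubring (hij : i ≠ j) (J : Finset (Fin l))
    (hy : y ∈ poleAlgebra k (otherPairs i j)) :
    scaleExpansion J y ∈ coeffSubring (regularSubring k i j) := by
  have zv_mem (s : Fin l) : (zv s : RF k l) ∈ regularSubring k i j :=
    mem_regularSubring_of_mem_poleAlgebra hij (zv_mem_poleAlgebra s)
  induction hy using Algebra.adjoin_induction with
  | mem x hx =>
    rcases hx with ⟨s, rfl⟩ | ⟨p, hp, rfl⟩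
    · rw [scaleExpansion_zv]
      exact single_mem_coeffSubring _ (zv_mem s)
    · exact scaleExpansion_inv_zv_sub_zv_mem_coeffSubring zv_mem (inv_zv_mem_regularSubring hij)
        (mem_regularSubring_of_mem_poleAlgebra hij (inv_zv_sub_zv_mem_poleAlgebra hp))
  | algebraMap c =>
    rw [AlgHom.commutes]
    exact single_mem_coeffSubring 0
      (mem_regularSubring_of_mem_poleAlgebra hij (Subalgebra.algebraMap_mem _ c))
  | add x y _ _ hx hy => rw [map_add]; exact add_mem hx hy
  | mul x y _ _ hx hy => rw [map_mul]; exact mul_mem hx hy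

/-- The additive map `ρ^{(0)}_{ij}`. -/
def rhoZero (k : Type) [Field k] {l : ℕ} (i j : Fin l) : RF k l →+ RF k l where
  toFun := rho i j 0
  map_zero' := by simp [rho_eq_coeff]
  map_add' := rho_add i j 0

lemma rhoZero_apply (i j : Fin l) (x : RF k l) : rhoZero k i j x = rho i j 0 x := rfl

lemma map_rhoZero_single (i j : Fin l) (n : ℤ) (x : RF k l) :
    (HahnSeries.single n x).map (rhoZero k i j) = HahnSeries.single n (rhoZero k i j x) :=
  HahnSeries.map_single (rhoZero k i j : ZeroHom (RF k l) (RF k l))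

lemma rhoZero_algebraMap (i j : Fin l) (c : k) :
    rhoZero k i j (algebraMap k (RF k l) c) = algebraMap k (RF k l) c := by
  change (pairExpansion i j (algebraMap k (RF k l) c)).coeff 0 = _
  rw [AlgHom.commutes]
  exact HahnSeries.coeff_single_same 0 _

lemma map_rhoZero_scaleExpansion_algebraMap (i j : Fin l) (J : Finset (Fin l)) (c : k) :
    (scaleExpansion J (algebraMap k (RF k l) c)).map (rhoZero k i j) =
      scaleExpansion (J.erase i) (rhoZero k i j (algebraMap k (RF k l) c)) := by
  rw [rhoZero_algebraMap, AlgHom.commutes, AlgHom.commutes]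
  exact (map_rhoZero_single i j 0 _).trans (congrArg _ (rhoZero_algebraMap i j c))

lemma map_rhoZero_scaleExpansion_zv (hij : i ≠ j) (hJ : i ∈ J ↔ j ∈ J) (s : Fin l) :
    (scaleExpansion J (zv s)).map (rhoZero k i j) =
      scaleExpansion (J.erase i) (rhoZero k i j (zv s)) := by
  have h_mem : Function.update id i j s ∈ J.erase i ↔ s ∈ J := by
    rw [Finset.mem_erase, Function.update_apply]
    split_ifs with h
    · simp [h, hJ, hij.symm]
    · simp [h]
  rw [scaleExpansion_zv, map_rhoZero_single, rhoZero_apply, rho_zero_zv, scaleExpansion_zv]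
  simp only [h_mem]

lemma rhoZero_mul (hij : i ≠ j) (hx : x ∈ poleAlgebra k (otherPairs i j))
    (hy : y ∈ poleAlgebra k (otherPairs i j)) :
    rhoZero k i j (x * y) = rhoZero k i j x * rhoZero k i j y :=
  rho_zero_mul (mem_regularSubring_of_mem_poleAlgebra hij hx)
    (mem_regularSubring_of_mem_poleAlgebra hij hy)

lemma map_rhoZero_scaleExpansion_mul (hij : i ≠ j) (J : Finset (Fin l))
    (hx : x ∈ poleAlgebra k (otherPairs i j)) (hy : y ∈ poleAlgebra k (otherPairs i j)) :
    (scaleExpansion J (x * y)).map (rhoZero k i j) =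
      (scaleExpansion J x).map (rhoZero k i j) * (scaleExpansion J y).map (rhoZero k i j) := by
  rw [map_mul]
  exact map_mul_of_mem_coeffSubring _ (fun _ ha _ hb => rho_zero_mul ha hb)
    (scaleExpansion_mem_coeffSubring hij J hx) (scaleExpansion_mem_coeffSubring hij J hy)

lemma map_rhoZero_scaleExpansion_inv (hij : i ≠ j) (hx : x ∈ poleAlgebra k (otherPairs i j))
    (hx_inv : x⁻¹ ∈ poleAlgebra k (otherPairs i j))
    (h : (scaleExpansion J x).map (rhoZero k i j) = scaleExpansion (J.erase i) (rhoZero k i j x)) :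
    (scaleExpansion J x⁻¹).map (rhoZero k i j) =
      scaleExpansion (J.erase i) (rhoZero k i j x⁻¹) := by
  rcases eq_or_ne x 0 with rfl | h0
  · rw [inv_zero] at hx_inv ⊢
    exact h
  have hone := map_rhoZero_scaleExpansion_algebraMap i j J (1 : k)
  have hl : (scaleExpansion J x).map (rhoZero k i j) *
      (scaleExpansion J x⁻¹).map (rhoZero k i j) = 1 := by
    rw [← map_rhoZero_scaleExpansion_mul hij J hx hx_inv, mul_inv_cancel₀ h0, ← map_one
      (algebraMap k (RF k l)), hone, rhoZero_algebraMap, map_one, map_one]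
  have hr : scaleExpansion (J.erase i) (rhoZero k i j x) *
      scaleExpansion (J.erase i) (rhoZero k i j x⁻¹) = 1 := by
    rw [← map_mul, ← rhoZero_mul hij hx hx_inv, mul_inv_cancel₀ h0, ← map_one
      (algebraMap k (RF k l)), rhoZero_algebraMap, map_one, map_one]
  rw [eq_inv_of_mul_eq_one_right hl, h, ← eq_inv_of_mul_eq_one_right hr]

lemma map_rhoZero_scaleExpansion (hij : i ≠ j) (hJ : i ∈ J ↔ j ∈ J)
    (hy : y ∈ poleAlgebra k (otherPairs i j)) :
    (scaleExpansion J y).map (rhoZero k i j) = scaleExpansion (J.erase i) (rhoZero k i j y) := by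
  induction hy using Algebra.adjoin_induction with
  | mem x hx =>
    rcases hx with ⟨s, rfl⟩ | ⟨p, hp, rfl⟩
    · exact map_rhoZero_scaleExpansion_zv hij hJ s
    · refine map_rhoZero_scaleExpansion_inv hij
        (sub_mem (zv_mem_poleAlgebra _) (zv_mem_poleAlgebra _))
        (inv_zv_sub_zv_mem_poleAlgebra hp) ?_
      rw [map_sub, HahnSeries.map_sub, map_rhoZero_scaleExpansion_zv hij hJ,
        map_rhoZero_scaleExpansion_zv hij hJ, map_sub, map_sub]
  | algebraMap c => exact map_rhoZero_scaleExpansion_algebraMap i j J c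
  | add x y _ _ hx hy => rw [map_add, HahnSeries.map_add, hx, hy, map_add, map_add]
  | mul x y hx hy hx_comm hy_comm =>
    rw [map_rhoZero_scaleExpansion_mul hij J hx hy, rhoZero_mul hij hx hy, map_mul,
      hx_comm, hy_comm]

variable [CharZero k] {D : Fin l → Derivation k (RF k l) (RF k l)}

lemma rho_natCast_coeff_scaleExpansion (hD : IsPartialDeriv D) (hij : i ≠ j) (hJ : i ∈ J ↔ j ∈ J)
    (n : ℕ) (m : ℤ) (hy : y ∈ poleAlgebra k (otherPairs i j)) :
    rho i j n ((scaleExpansion J y).coeff m) =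
      (scaleExpansion (J.erase i) (rho i j n y)).coeff (m - n * if i ∈ J then 1 else 0) := by
  induction n generalizing m y with
  | zero =>
    simpa [rhoZero_apply] using congrArg (fun f => f.coeff m) (map_rhoZero_scaleExpansion hij hJ hy)
  | succ n ih =>
    set ε : ℤ := if i ∈ J then 1 else 0
    have hDy : D i y ∈ poleAlgebra k (otherPairs i j) := by
      refine derivation_mem_poleAlgebra (fun s => ?_) hy
      rw [hD]
      split_ifs
      exacts [one_mem _, zero_mem _]
    have hn : ((n + 1 : ℤ) : RF k l) ≠ 0 := Int.cast_ne_zero.2 (by lia)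
    refine mul_left_cancel₀ hn ?_
    have hpartial := rho_sub_one_partial hD hij (n + 1)
    rw [add_sub_cancel_right] at hpartial
    calc ((n + 1 : ℤ) : RF k l) * rho i j (n + 1 : ℕ) ((scaleExpansion J y).coeff m)
        = rho i j n (D i ((scaleExpansion J y).coeff m)) := (hpartial _).symm
      _ = rho i j n ((scaleExpansion J (D i y)).coeff (m - ε)) := by
        rw [scaleExpansion_partial hD]
      _ = (scaleExpansion (J.erase i) (rho i j n (D i y))).coeff (m - ε - n * ε) := ih _ hDy
      _ = ((n + 1 : ℤ) : RF k l) *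
          (scaleExpansion (J.erase i) (rho i j (n + 1 : ℕ) y)).coeff (m - (n + 1 : ℕ) * ε) := by
        rw [hpartial, map_mul, map_intCast, ← map_intCast (HahnSeries.C (Γ := ℤ)),
          HahnSeries.C_apply, HahnSeries.coeff_single_zero_mul]
        congr 2
        push_cast
        ring

lemma rho_coeff_scaleExpansion_of_mem_poleAlgebra (hD : IsPartialDeriv D) (hij : i ≠ j)
    (hJ : i ∈ J ↔ j ∈ J) (n m : ℤ) (hy : y ∈ poleAlgebra k (otherPairs i j)) :
    rho i j n ((scaleExpansion J y).coeff m) =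
      (scaleExpansion (J.erase i) (rho i j n y)).coeff (m - n * if i ∈ J then 1 else 0) := by
  rcases lt_or_ge n 0 with hn | hn
  · rw [rho_eq_zero_of_mem_regularSubring (scaleExpansion_mem_coeffSubring hij J hy m) hn,
      rho_eq_zero_of_mem_regularSubring (mem_regularSubring_of_mem_poleAlgebra hij hy) hn, map_zero,
      HahnSeries.coeff_zero]
  · lift n to ℕ using hn
    exact rho_natCast_coeff_scaleExpansion hD hij hJ n m hy

lemma rho_coeff_scaleExpansion (hD : IsPartialDeriv D) (hij : i ≠ j) (hJ : i ∈ J ↔ j ∈ J)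
    (n m : ℤ) (hx : x ∈ Phi k l) :
    rho i j n ((scaleExpansion J x).coeff m) =
      (scaleExpansion (J.erase i) (rho i j n x)).coeff (m - n * if i ∈ J then 1 else 0) := by
  obtain ⟨e, y, hy, rfl⟩ := exists_zpow_mul_of_mem_Phi hij hx
  set ε : ℤ := if i ∈ J then 1 else 0 with hε
  have hu : scaleExpansion J ((zv i - zv j : RF k l) ^ e) =
      HahnSeries.single (e * ε) ((zv i - zv j) ^ e) := by
    rw [map_zpow₀, map_sub, scaleExpansion_zv, scaleExpansion_zv, ← hε, if_congr hJ.symm rfl rfl,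
      ← hε, ← HahnSeries.single_sub, single_zpow]
  rw [map_mul, hu, HahnSeries.coeff_single_mul, rho_zpow_mul hij, rho_zpow_mul hij,
    rho_coeff_scaleExpansion_of_mem_poleAlgebra hD hij hJ _ _ hy, ← hε]
  congr 1
  ring

end Commutation

section DependsOnly

open Polynomial

variable {k : Type} [Field k] {l : ℕ} {j : Fin l} {S : Finset (Fin l)} {x : RF k l}

lemma mem_adjoin_zv_of_mem_subfieldOn (j : Fin l) (hx : x ∈ subfieldOn k S) :
    x ∈ IntermediateField.adjoin (subfieldOn k (S.erase j)) {(zv j : RF k l)} := by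
  set K := subfieldOn k (S.erase j) with hK
  set A := IntermediateField.adjoin K {(zv j : RF k l)} with hA
  have mem_of_mem {c : RF k l} (hc : c ∈ K) : c ∈ A := A.algebraMap_mem ⟨c, hc⟩
  induction hx using IntermediateField.adjoin_induction with
  | mem x hx =>
    obtain ⟨s, hs, rfl⟩ := hx
    rcases eq_or_ne s j with rfl | hsj
    · exact IntermediateField.mem_adjoin_simple_self _ _
    · exact mem_of_mem (zv_mem_subfieldOn (Finset.mem_erase.2 ⟨hsj, hs⟩))
  | algebraMap c => exact mem_of_mem (K.algebraMap_mem c)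
  | add x y _ _ hx hy => exact add_mem hx hy
  | inv x _ hx => exact inv_mem hx
  | mul x y _ _ hx hy => exact mul_mem hx hy

section Adjoin

variable {K : IntermediateField k (RF k l)}

lemma coeff_scaleExpansion_aeval_zv (hK : ∀ c ∈ K, scaleExpansion {j} c = HahnSeries.C c)
    (p : K[X]) (n : ℕ) :
    (scaleExpansion {j} (aeval (zv j) p)).coeff n = (p.coeff n : RF k l) * zv j ^ n := by
  induction p using Polynomial.induction_on' with
  | add p q hp hq =>
    rw [map_add, map_add, HahnSeries.coeff_add, hp, hq, coeff_add, ← add_mul]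
    rfl
  | monomial m c =>
    rw [aeval_monomial, IntermediateField.algebraMap_apply, map_mul, map_pow, hK c c.2,
      scaleExpansion_zv_of_mem (Finset.mem_singleton_self j), HahnSeries.single_pow,
      HahnSeries.C_apply, HahnSeries.single_mul_single, HahnSeries.coeff_single, coeff_monomial]
    rcases eq_or_ne m n with rfl | h
    · simp
    · simp [h, h.symm]

lemma mem_of_mem_adjoin_zv_of_scaleExpansion_eq_C {a : RF k l}
    (hK : ∀ c ∈ K, scaleExpansion {j} c = HahnSeries.C c)
    (hx : x ∈ IntermediateField.adjoin K {(zv j : RF k l)})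
    (hx_const : scaleExpansion {j} x = HahnSeries.C a) : x ∈ K := by
  obtain ⟨p, q, rfl⟩ := (IntermediateField.mem_adjoin_simple_iff K x).1 hx
  rcases eq_or_ne (aeval (zv j : RF k l) q) 0 with hq | hq
  · rw [hq, div_zero]
    exact zero_mem _
  have hq_lead : (q.leadingCoeff : RF k l) ≠ 0 := by
    rw [Ne, ZeroMemClass.coe_eq_zero, leadingCoeff_eq_zero]
    rintro rfl
    exact hq (map_zero _)
  have h : a * q.leadingCoeff = p.coeff q.natDegree := by
    have h_mul := congrArg (scaleExpansion {j}) (div_mul_cancel₀ (aeval (zv j : RF k l) p) hq)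
    rw [map_mul, hx_const, HahnSeries.C_apply] at h_mul
    have h_coeff := congrArg (fun f => f.coeff (q.natDegree : ℤ)) h_mul
    simp only [HahnSeries.coeff_single_zero_mul, coeff_scaleExpansion_aeval_zv (k := k) hK,
      ← mul_assoc] at h_coeff
    exact mul_right_cancel₀ (pow_ne_zero _ (zv_ne_zero j)) h_coeff
  have ha : a ∈ K := by
    rw [eq_div_of_mul_eq hq_lead h]
    exact div_mem (p.coeff _).2 q.leadingCoeff.2
  have hx_eq : aeval (zv j : RF k l) p / aeval (zv j : RF k l) q = a :=
    (scaleExpansion {j}).injective (hx_const.trans (hK a ha).symm)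
  rwa [hx_eq]

end Adjoin

variable [CharZero k] {D : Fin l → Derivation k (RF k l) (RF k l)}

lemma coeff_scaleExpansion_singleton_eq_zero (hD : IsPartialDeriv D) {n : ℤ} (hn : n ≠ 0)
    (h : D j ((scaleExpansion {j} x).coeff n) = 0) : (scaleExpansion {j} x).coeff n = 0 := by
  have h_euler := vectorField_zv_coeff_scaleExpansion hD {j} n x
  rw [vectorField_apply, Finset.sum_singleton, h, mul_zero, eq_comm, mul_eq_zero] at h_euler
  exact h_euler.resolve_left (Int.cast_ne_zero.2 hn)

lemma mem_subfieldOn_erase (hD : IsPartialDeriv D) (hx : x ∈ subfieldOn k S) (h : D j x = 0) :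
    x ∈ subfieldOn k (S.erase j) := by
  refine mem_of_mem_adjoin_zv_of_scaleExpansion_eq_C (a := (scaleExpansion {j} x).coeff 0)
    (fun c hc => scaleExpansion_of_mem_subfieldOn (by simp) hc)
    (mem_adjoin_zv_of_mem_subfieldOn j hx) ?_
  ext n
  rw [HahnSeries.C_apply, HahnSeries.coeff_single]
  split_ifs with hn
  · rw [hn]
  · refine coeff_scaleExpansion_singleton_eq_zero hD hn ?_
    rw [← scaleExpansion_partial hD, h, map_zero, HahnSeries.coeff_zero]

lemma eq_zero_of_Delta_eq_zero (hD : IsPartialDeriv D) (hx : Delta D x = 0)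
    (h0 : (scaleExpansion {j} x).coeff 0 = 0) : x = 0 := by
  refine (map_eq_zero (scaleExpansion (k := k) {j})).1 ?_
  by_contra hne
  have h_lead := mt HahnSeries.coeff_order_eq_zero.1 hne
  set n := (scaleExpansion {j} x).order
  have h_below : (scaleExpansion {j} x).coeff (n - 1) = 0 :=
    HahnSeries.coeff_eq_zero_of_lt_order (by lia)
  refine h_lead (coeff_scaleExpansion_singleton_eq_zero hD (fun h => h_lead (h ▸ h0)) ?_)
  simpa [hx, h_below] using (scaleExpansion_singleton_Delta hD j (n - 1) x).symm

end DependsOnly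

section Components

variable {k : Type} [Field k] [CharZero k] {l : ℕ} {D : Fin l → Derivation k (RF k l) (RF k l)}
  {i j : Fin l} {J : Finset (Fin l)} {x : RF k l}

lemma component_rho_of_notMem (hD : IsPartialDeriv D) (hij : i ≠ j) (hx : x ∈ Phi k l)
    (hi : i ∉ J) (hj : j ∉ J) (d : Fin l → ℤ) (m n : ℤ) :
    component J d m (rho i j n x) = rho i j n (component J d m x) := by
  rw [component_eq_coeff, component_eq_coeff,
    rho_coeff_scaleExpansion hD hij (iff_of_false hi hj) _ _ hx, if_neg hi, mul_zero, sub_zero,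
    Finset.erase_eq_of_notMem hi]

lemma component_rho_of_mem (hD : IsPartialDeriv D) (hij : i ≠ j) (hx : x ∈ Phi k l)
    (hi : i ∉ J) (hj : j ∈ J) (d : Fin l → ℤ) (m n : ℤ) :
    component J d m (rho i j n x) = rho i j n (component (insert i J) d (m + n + d i) x) := by
  have hi' := Finset.mem_insert_self i J
  rw [component_eq_coeff, component_eq_coeff,
    rho_coeff_scaleExpansion hD hij (iff_of_true hi' (Finset.mem_insert_of_mem hj)) _ _ hx,
    if_pos hi', Finset.erase_insert hi, Finset.sum_insert hi]
  congr 1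
  ring

lemma isHomogeneousOn_rho (hD : IsPartialDeriv D) (hij : i ≠ j) (hx : x ∈ Phi k l) {d : ℤ}
    (hx_hom : IsHomogeneousOn Finset.univ d x) (n : ℤ) :
    IsHomogeneousOn {i}ᶜ (d - n) (rho i j n x) := by
  rw [isHomogeneousOn_iff] at hx_hom ⊢
  ext m
  have h := rho_coeff_scaleExpansion (J := Finset.univ) hD hij (by simp) n (m + n) hx
  rw [if_pos (Finset.mem_univ i), mul_one, add_sub_cancel_right, hx_hom] at h
  rw [Finset.compl_singleton, ← h, HahnSeries.coeff_single, HahnSeries.coeff_single]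
  simp only [eq_sub_iff_add_eq]
  split_ifs
  exacts [rfl, rho_zero i j n]

end Components

section Admissible

variable {k : Type} [Field k] {l : ℕ} {D : Fin l → Derivation k (RF k l) (RF k l)}
  {i j : Fin l} {α : RF k l}

lemma DeltaStar_eq_zero_of_admissible (hα : Admissible D Finset.univ α) :
    DeltaStar D (fun _ => 4) α = 0 := by
  simpa [DeltaStar] using hα.2.2.1

variable [CharZero k]

lemma Delta_eq_zero_of_admissible (hD : IsPartialDeriv D) (hα : Admissible D Finset.univ α) :
    Delta D α = 0 := by
  refine Delta_eq_zero hD (w := fun _ => 4) ?_ hα.1 (DeltaStar_eq_zero_of_admissible hα)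
    hα.2.2.2.1
  rw [Finset.sum_const, nsmul_eq_mul]
  ring

lemma Delta_rho_eq_zero (hD : IsPartialDeriv D) (hα : Admissible D Finset.univ α) (i j : Fin l)
    (n : ℤ) : Delta D (rho i j n α) = 0 := by
  rw [← rho_Delta hD, Delta_eq_zero_of_admissible hD hα, rho_zero]

lemma component_singleton_rho_eq_zero (hD : IsPartialDeriv D) (hα : Admissible D Finset.univ α)
    (hij : i ≠ j) {m n : ℤ} (h : m + n + 2 < 0 ∨ m + n + 2 = 1) :
    (scaleExpansion {j} (rho i j n α)).coeff (m - 2) = 0 := by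
  have h_comp := component_rho_of_mem hD hij hα.1 (Finset.notMem_singleton.2 hij)
    (Finset.mem_singleton_self j) (fun _ => 2) m n
  rw [hα.2.2.2.2 _ (Finset.subset_univ _) _ h] at h_comp
  simpa [component_eq_coeff, rho_eq_coeff] using h_comp

lemma rho_eq_zero (hD : IsPartialDeriv D) (hα : Admissible D Finset.univ α) (hij : i ≠ j) {n : ℤ}
    (hn : n < -4 ∨ n = -3) : rho i j n α = 0 :=
  eq_zero_of_Delta_eq_zero (j := j) hD (Delta_rho_eq_zero hD hα i j n)
    (component_singleton_rho_eq_zero hD hα hij (m := 2) (by lia))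

lemma partial_rho_neg_four (hD : IsPartialDeriv D) (hα : Admissible D Finset.univ α)
    (hij : i ≠ j) : D j (rho i j (-4) α) = 0 := by
  refine eq_zero_of_Delta_eq_zero (j := j) hD ?_ ?_
  · rw [Delta_partial hD, Delta_rho_eq_zero hD hα, map_zero]
  · have h := scaleExpansion_partial hD {j} j 1 (rho i j (-4) α)
    have h_coeff := component_singleton_rho_eq_zero hD hα hij (m := 3) (n := -4) (by lia)
    rw [show (1 : ℤ) = 3 - 2 by norm_num, h_coeff] at h
    simpa using h

lemma regular_rho (hD : IsPartialDeriv D) (hα : Admissible D Finset.univ α) (hij : i ≠ j)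
    {n : ℤ} (hn : n = -4 ∨ n = -2) :
    ∑ s ∈ {i}ᶜ, (zv s ^ 2 * D s (rho i j n α) + 4 * zv s * rho i j n α) =
      -((2 * n + 4 : RF k l) * zv j * rho i j n α) := by
  have h := rho_DeltaStar hD hij (fun _ => 4) n α
  rw [DeltaStar_eq_zero_of_admissible hα, rho_eq_zero hD hα hij (n := n - 1) (by lia)] at h
  simp only [rho_zero, mul_zero, add_zero, Int.cast_ofNat] at h
  exact eq_neg_of_add_eq_zero_left h.symm

lemma admissible_rho_neg_two (hD : IsPartialDeriv D) (hα : Admissible D Finset.univ α)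
    (hij : i ≠ j) : Admissible D {i}ᶜ (rho i j (-2) α) := by
  refine ⟨rho_mem_Phi hij _ hα.1,
    dependsOnlyOn_iff_mem_subfieldOn.2 (rho_mem_subfieldOn hij _ hα.1), ?_, ?_, fun J hJ n hn => ?_⟩
  · rw [regular_rho hD hα hij (Or.inr rfl)]
    norm_num
  · convert isHomogeneousOn_rho hD hij hα.1 hα.2.2.2.1 (-2) using 1
    have h_card := Finset.card_add_card_compl ({i} : Finset (Fin l))
    rw [Finset.card_singleton] at h_card
    rw [Finset.card_univ]
    lia
  · have hi : i ∉ J := fun h => by simpa using hJ h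
    have hα_comp (K : Finset (Fin l)) : component K (fun _ => 2) n α = 0 :=
      hα.2.2.2.2 K (Finset.subset_univ K) n hn
    by_cases hj : j ∈ J
    · rw [component_rho_of_mem hD hij hα.1 hi hj, neg_add_cancel_right, hα_comp, rho_zero]
    · rw [component_rho_of_notMem hD hij hα.1 hi hj, hα_comp, rho_zero]

lemma admissible_rho_neg_four (hD : IsPartialDeriv D) (hα : Admissible D Finset.univ α)
    (hij : i ≠ j) : Admissible D {i, j}ᶜ (rho i j (-4) α) := by
  have h_compl : ({i}ᶜ : Finset (Fin l)).erase j = {i, j}ᶜ := by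
    ext s
    simp [and_comm]
  have h_mem : rho i j (-4) α ∈ subfieldOn k {i, j}ᶜ := by
    rw [← h_compl]
    exact mem_subfieldOn_erase hD (rho_mem_subfieldOn hij _ hα.1) (partial_rho_neg_four hD hα hij)
  refine ⟨rho_mem_Phi hij _ hα.1, dependsOnlyOn_iff_mem_subfieldOn.2 h_mem, ?_, ?_,
    fun J hJ n hn => ?_⟩
  · have h := regular_rho hD hα hij (Or.inl rfl)
    rw [← Finset.add_sum_erase _ _ (show j ∈ {i}ᶜ by simpa using hij.symm), h_compl,
      partial_rho_neg_four hD hα hij] at h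
    push_cast at h
    linear_combination h
  · convert isHomogeneousOn_inter_of_mem_subfieldOn h_mem
      (isHomogeneousOn_rho hD hij hα.1 hα.2.2.2.1 (-4)) using 1
    · rw [← h_compl, Finset.inter_eq_right.2 (Finset.erase_subset _ _)]
    · have h_card := Finset.card_add_card_compl ({i, j} : Finset (Fin l))
      rw [Finset.card_pair hij] at h_card
      rw [Finset.card_univ]
      lia
  · have hi : i ∉ J := fun h => by simpa using hJ h
    have hj : j ∉ J := fun h => by simpa using hJ h
    rw [component_rho_of_notMem hD hij hα.1 hi hj, hα.2.2.2.2 J (Finset.subset_univ J) n hn,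
      rho_zero]

end Admissible

theorem statement9_general {k : Type} [Field k] [CharZero k] {l : ℕ}
    (D : Fin l → Derivation k (RF k l) (RF k l)) (hD : IsPartialDeriv D)
    (α : RF k l) (hadm : Admissible D Finset.univ α) (i j : Fin l) (hij : i ≠ j) :
    Admissible D ({i, j}ᶜ : Finset (Fin l)) (rho i j (-4) α) ∧ rho i j (-3) α = 0 ∧
      Admissible D ({i}ᶜ : Finset (Fin l)) (rho i j (-2) α) :=
  ⟨admissible_rho_neg_four hD hadm hij, rho_eq_zero hD hadm hij (Or.inr rfl),
    admissible_rho_neg_two hD hadm hij⟩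

/-- for `l ≥ 3`, `α ∈ R^l` and `1 ≤ i < j ≤ l`:
(i) `ρ^{(-4)}_{ij}α` does not depend on `z_i, z_j` and is an admissible function of
the remaining `l-2` variables; (ii) `ρ^{(-3)}_{ij}α = 0`; (iii) `ρ^{(-2)}_{ij}α` is
an admissible function of the `l-1` variables other than `z_i`. -/
theorem statement9 {k : Type} [Field k] [CharZero k] {l : ℕ} (hl : 3 ≤ l)
    (D : Fin l → Derivation k (RF k l) (RF k l)) (hD : IsPartialDeriv D)
    (α : RF k l) (hadm : Admissible D Finset.univ α)
    (i j : Fin l) (hij : i < j) :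
    Admissible D ({i, j}ᶜ : Finset (Fin l)) (rho i j (-4) α) ∧
    rho i j (-3) α = 0 ∧
    Admissible D ({i}ᶜ : Finset (Fin l)) (rho i j (-2) α) :=
  statement9_general D hD α hadm i j hij.ne

end Griess
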